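/- arXiv:2104.13890 — 3 statements merged into one kernel-verified Lean document; each statement's English description precedes it below -/
import Mathlib

section
/- Let G = ℤⁿ act on a compact metrizable space X with continuous 1-cocycle Ω : G × X → ℝ. If there exists an ergodic G-invariant probability measure μ on X such that ∫_X Ω(g,x) dμ(x) = 0 for all g ∈ G, then for every β ∈ ℝ there exists an e^{β·Ω}-conformal probability measure on X (i.e., the KMS spectrum equals ℝ). -/
open MeasureTheory

/-- A Borel probability measure `m` is `e^{β·Ω}`-conformal for an additive action. -/
def ConformalMeasureAdd {G X : Type*} [AddGroup G] [TopologicalSpace X] [MeasurableSpace X]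
    [AddAction G X] (Ω : G → X → ℝ) (β : ℝ) (m : Measure X) : Prop :=
  ∀ g : G, ∀ f : C(X, ℝ),
    ∫ x, f (g +ᵥ x) * Real.exp (β * Ω g x) ∂m = ∫ x, f x ∂m


open Filter Topology in
lemma kms_hilb {H : Type*} [NormedAddCommGroup H] [InnerProductSpace ℝ H] [CompleteSpace H]
    (V : Submodule ℝ H) (Φ : H) : ∃ v : H, Φ - v ∈ V.topologicalClosure ∧
      (∀ w ∈ V.topologicalClosure, inner ℝ v w = 0) ∧
      ∀ U : H →ₗᵢ[ℝ] H, (∀ w ∈ V, U w ∈ V) → U Φ - Φ ∈ V → U v = v := by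
  set W := V.topologicalClosure with hW
  have : CompleteSpace W := V.isClosed_topologicalClosure.completeSpace_coe
  obtain ⟨p, hp, v, hv, hpv⟩ := W.exists_add_mem_mem_orthogonal Φ
  have hort : ∀ w ∈ W, inner ℝ v w = 0 := fun w hw => W.inner_left_of_mem_orthogonal hw hv
  refine ⟨v, by rw [hpv]; simpa using hp, hort, ?_⟩
  intro U hU hΦ
  have hUW : ∀ w ∈ W, U w ∈ W := by
    intro w hw
    have : w ∈ closure (V : Set H) := hw
    exact map_mem_closure U.continuous this (fun a ha => hU a ha)
  have hd : U v - v ∈ W := by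
    have : U v - v = (U Φ - Φ) - U p + p := by rw [hpv, map_add]; abel
    rw [this]
    exact W.add_mem (W.sub_mem (V.le_topologicalClosure hΦ) (hUW p hp)) hp
  have h0 := hort _ hd
  have h1 : ‖U v‖ = ‖v‖ := U.norm_map v
  have h2 : ‖U v‖ * ‖U v‖ = ‖v‖ * ‖v‖ + ‖U v - v‖ * ‖U v - v‖ := by
    have := norm_add_sq_eq_norm_sq_add_norm_sq_of_inner_eq_zero v (U v - v) h0
    simpa using this
  have h3 : ‖U v - v‖ * ‖U v - v‖ = 0 := by rw [h1] at h2; linarith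
  have h4 : ‖U v - v‖ = 0 := by simpa using h3
  exact sub_eq_zero.1 (norm_eq_zero.1 h4)

lemma kms_aeconst {G X E : Type*} [AddGroup G] [Countable G] [MeasurableSpace X] [AddAction G X]
    (hmeas : ∀ g : G, Measurable (fun x : X => g +ᵥ x))
    [NormedAddCommGroup E] [SecondCountableTopology E]
    (μ : Measure X) [IsProbabilityMeasure μ]
    (herg : ∀ B : Set X, MeasurableSet B →
      (∀ g : G, (fun x => g +ᵥ x) ⁻¹' B = B) → μ B = 0 ∨ μ B = 1)
    (v : X → E) (hv : StronglyMeasurable v)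
    (hinv : ∀ g : G, ∀ᵐ x ∂μ, v (g +ᵥ x) = v x) : ∃ c, ∀ᵐ x ∂μ, v x = c := by
  borelize E
  refine Filter.exists_eventuallyEq_const_of_forall_separating (l := ae μ) (f := v)
    MeasurableSet fun U hU => ?_
  set B : Set X := ⋂ g : G, (fun x => g +ᵥ x) ⁻¹' (v ⁻¹' U) with hB
  have hBm : MeasurableSet B :=
    MeasurableSet.iInter fun g => hmeas g (hv.measurable hU)
  have hall : ∀ᵐ x ∂μ, ∀ g : G, v (g +ᵥ x) = v x := ae_all_iff.2 hinv
  have hBU : ∀ᵐ x ∂μ, (x ∈ B ↔ v x ∈ U) := by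
    filter_upwards [hall] with x hx
    simp [hB, hx]
  have hBi : ∀ g : G, (fun x => g +ᵥ x) ⁻¹' B = B := by
    intro g
    ext x
    simp only [hB, Set.mem_preimage, Set.mem_iInter]
    constructor
    · intro h k
      have := h (k - g)
      rwa [vadd_vadd, sub_add_cancel] at this
    · intro h k
      rw [vadd_vadd]
      exact h _
  rcases herg B hBm hBi with h | h
  · right
    have : ∀ᵐ x ∂μ, x ∉ B := measure_eq_zero_iff_ae_notMem.1 h
    filter_upwards [this, hBU] with x h1 h2
    exact fun h => h1 (h2.2 h)
  · left
    have : ∀ᵐ x ∂μ, x ∈ B := (mem_ae_iff_prob_eq_one hBm).2 h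
    filter_upwards [this, hBU] with x h1 h2
    exact h2.1 h1

lemma kms_coboundary
    {n : ℕ} {X : Type*} [TopologicalSpace X] [CompactSpace X]
    [TopologicalSpace.MetrizableSpace X] [MeasurableSpace X] [BorelSpace X]
    [AddAction (Fin n → ℤ) X] [ContinuousConstVAdd (Fin n → ℤ) X]
    (Ω : (Fin n → ℤ) → X → ℝ) (hΩcont : ∀ g, Continuous (Ω g))
    (hΩ : ∀ (g h : Fin n → ℤ) (x : X), Ω g (h +ᵥ x) + Ω h x = Ω (g + h) x)
    (μ : Measure X) [IsProbabilityMeasure μ]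
    (hμinv : ∀ g : Fin n → ℤ, Measure.map (fun x => g +ᵥ x) μ = μ)
    (herg : ∀ B : Set X, MeasurableSet B →
      (∀ g : Fin n → ℤ, (fun x => g +ᵥ x) ⁻¹' B = B) → μ B = 0 ∨ μ B = 1)
    (hmean : ∀ g : Fin n → ℤ, ∫ x, Ω g x ∂μ = 0) (ε : ℝ) (hε : 0 < ε) :
    ∃ h : C(X, ℝ), ∀ i : Fin n,
      ∫ x, |Ω (Pi.single i 1) x - (h ((Pi.single i 1 : Fin n → ℤ) +ᵥ x) - h x)| ∂μ ≤ ε := by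
  have hcv : ∀ g : Fin n → ℤ, Continuous (fun x : X => g +ᵥ x) := fun g => continuous_const_vadd g
  have hmp : ∀ g : Fin n → ℤ, MeasurePreserving (fun x : X => g +ᵥ x) μ μ :=
    fun g => ⟨(hcv g).measurable, hμinv g⟩
  let e : Fin n → (Fin n → ℤ) := fun i => Pi.single i 1
  let ΦC : C(X, EuclideanSpace ℝ (Fin n)) := ⟨fun x => WithLp.toLp 2 (fun i => Ω (e i) x), by
    refine (PiLp.continuous_toLp 2 _).comp (continuous_pi fun i => hΩcont _)⟩
  let δ : C(X, ℝ) →ₗ[ℝ] C(X, EuclideanSpace ℝ (Fin n)) :=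
    { toFun := fun h => ⟨fun x => WithLp.toLp 2 (fun i => h (e i +ᵥ x) - h x), by
        refine (PiLp.continuous_toLp 2 _).comp (continuous_pi fun i => ?_)
        exact (h.continuous.comp (hcv _)).sub h.continuous⟩
      map_add' := by
        intro a b; ext x i; simp; ring
      map_smul' := by
        intro a b; ext x i; simp; ring }
  let L : C(X, EuclideanSpace ℝ (Fin n)) →L[ℝ] Lp (EuclideanSpace ℝ (Fin n)) 2 μ := ContinuousMap.toLp 2 μ ℝ
  let U : (Fin n → ℤ) → (Lp (EuclideanSpace ℝ (Fin n)) 2 μ →ₗᵢ[ℝ] Lp (EuclideanSpace ℝ (Fin n)) 2 μ) := fun g =>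
    Lp.compMeasurePreservingₗᵢ ℝ (fun x => g +ᵥ x) (hmp g)
  have hUL : ∀ g (f : C(X, EuclideanSpace ℝ (Fin n))), U g (L f) = L (f.comp ⟨_, hcv g⟩) := by
    intro g f
    rfl
  let V : Submodule ℝ (Lp (EuclideanSpace ℝ (Fin n)) 2 μ) := LinearMap.range (L.toLinearMap ∘ₗ δ)
  obtain ⟨v, hv1, hv2, hv3⟩ := kms_hilb V (L ΦC)
  have hfix : ∀ g, U g v = v := by
    intro g
    apply hv3
    · rintro _ ⟨h, rfl⟩
      refine ⟨h.comp ⟨_, hcv g⟩, ?_⟩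
      change L _ = U g (L _)
      rw [hUL]
      congr 1
      ext x i
      simp [δ, vadd_vadd, add_comm]
    · rw [hUL, ← map_sub]
      refine ⟨⟨Ω g, hΩcont g⟩, ?_⟩
      change L _ = _
      congr 1
      ext x i
      simp only [δ, ΦC, LinearMap.coe_mk, AddHom.coe_mk, ContinuousMap.coe_mk,
        ContinuousMap.sub_apply, ContinuousMap.comp_apply, PiLp.sub_apply]
      have h1 := hΩ g (e i) x
      have h2 := hΩ (e i) g x
      rw [add_comm (e i) g] at h2
      linarith
  obtain ⟨c, hc⟩ := kms_aeconst (fun g => (hcv g).measurable) μ herg v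
    (Lp.stronglyMeasurable v) (by
      intro g
      have h1 := Lp.coeFn_compMeasurePreserving v (hmp g)
      have h2 : Lp.compMeasurePreserving _ (hmp g) v = v := hfix g
      rw [h2] at h1
      filter_upwards [h1] with x hx
      exact hx.symm)
  have hvΦ : inner ℝ v (L ΦC) = 0 := by
    rw [L2.inner_def]
    have h1 : ∀ᵐ x ∂μ, (inner ℝ (v x) ((L ΦC : Lp (EuclideanSpace ℝ (Fin n)) 2 μ) x) : ℝ) = ∑ i, c i * Ω (e i) x := by
      filter_upwards [hc, ContinuousMap.coeFn_toLp (𝕜 := ℝ) (p := 2) μ ΦC] with x hx hx2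
      rw [hx, hx2, PiLp.inner_apply]
      refine Finset.sum_congr rfl fun i _ => ?_
      simp [ΦC, mul_comm]
    rw [integral_congr_ae h1, integral_finsetSum]
    · refine Finset.sum_eq_zero fun i _ => ?_
      rw [integral_const_mul, hmean, mul_zero]
    · intro i _
      exact ((hΩcont (e i)).integrable_of_hasCompactSupport
        (HasCompactSupport.of_compactSpace _)).const_mul _
  have hv0 : v = 0 := by
    have h1 := hv2 _ hv1
    rw [inner_sub_right, hvΦ, zero_sub, neg_eq_zero] at h1
    exact inner_self_eq_zero.1 h1
  rw [hv0, sub_zero] at hv1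
  have hcl : L ΦC ∈ closure (V : Set (Lp (EuclideanSpace ℝ (Fin n)) 2 μ)) := hv1
  obtain ⟨w, ⟨h, rfl⟩, hw⟩ := Metric.mem_closure_iff.1 hcl ε hε
  refine ⟨h, fun i => ?_⟩
  have hw' : ‖L (ΦC - δ h)‖ < ε := by
    rw [map_sub, ← dist_eq_norm]; exact hw
  set F := ΦC - δ h with hF
  have hFi : ∀ x, Ω (Pi.single i 1) x - (h ((Pi.single i 1 : Fin n → ℤ) +ᵥ x) - h x) = F x i := by
    intro x; simp [hF, ΦC, δ, e]
  simp_rw [hFi]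
  have hIntg : ∀ f : X → ℝ, Continuous f → Integrable f μ := fun f hf =>
    hf.integrable_of_hasCompactSupport (HasCompactSupport.of_compactSpace _)
  have hsq : ∫ x, ‖F x‖ ^ 2 ∂μ = ‖L F‖ ^ 2 := by
    rw [← real_inner_self_eq_norm_sq, L2.inner_def]
    apply integral_congr_ae
    filter_upwards [ContinuousMap.coeFn_toLp (𝕜 := ℝ) (p := 2) μ F] with x hx
    rw [hx, real_inner_self_eq_norm_sq]
  -- use |a| ≤ (a^2 + ε^2) / (2 ε)
  have hFc : Continuous fun x => ‖F x‖ ^ 2 := by fun_prop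
  have hFi2 : Continuous fun x => |F x i| := by fun_prop
  calc ∫ x, |F x i| ∂μ ≤ ∫ x, (‖F x‖ ^ 2 + ε ^ 2) / (2 * ε) ∂μ := by
        apply integral_mono (hIntg _ hFi2)
          (hIntg (fun x => (‖F x‖ ^ 2 + ε ^ 2) / (2 * ε)) (by fun_prop))
        intro x
        have h1 : |F x i| ≤ ‖F x‖ := PiLp.norm_apply_le (F x) i
        show |F x i| ≤ (‖F x‖ ^ 2 + ε ^ 2) / (2 * ε)
        rw [le_div_iff₀ (by positivity)]
        nlinarith [sq_nonneg (‖F x‖ - ε)]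
    _ = (‖L F‖ ^ 2 + ε ^ 2) / (2 * ε) := by
        rw [integral_div, integral_add (hIntg _ hFc) (integrable_const _), hsq]
        simp
    _ ≤ ε := by
        rw [div_le_iff₀ (by positivity)]
        nlinarith [norm_nonneg (L F)]


lemma kms_subadd {n : ℕ} (N : (Fin n → ℤ) → ℝ) (c : ℝ) (h0 : N 0 ≤ 0)
    (hadd : ∀ g h, N (g + h) ≤ N g + N h) (hneg : ∀ g, N (-g) ≤ N g)
    (hc : ∀ i, N (Pi.single i 1) ≤ c) (g : Fin n → ℤ) :
    N g ≤ c * ∑ i, |(g i : ℝ)| := by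
  have hnat : ∀ i (k : ℕ), N (Pi.single i (k : ℤ)) ≤ c * k := by
    intro i k
    induction k with
    | zero => simpa using h0
    | succ k ih =>
      have : (Pi.single i ((k + 1 : ℕ) : ℤ) : Fin n → ℤ) = Pi.single i (k : ℤ) + Pi.single i 1 := by
        rw [← Pi.single_add]; push_cast; rfl
      rw [this]
      have := hadd (Pi.single i (k : ℤ)) (Pi.single i 1)
      have := hc i
      push_cast
      linarith
  have hIntg : ∀ i (k : ℤ), N (Pi.single i k) ≤ c * |(k : ℝ)| := by
    intro i k
    obtain ⟨m, rfl | rfl⟩ := k.eq_nat_or_neg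
    · simpa using hnat i m
    · rw [Pi.single_neg]
      refine (hneg _).trans ?_
      simpa using hnat i m
  have hsum : ∀ s : Finset (Fin n),
      N (∑ i ∈ s, Pi.single i (g i)) ≤ c * ∑ i ∈ s, |(g i : ℝ)| := by
    intro s
    induction s using Finset.induction_on with
    | empty => simpa using h0
    | insert a s ha ih =>
      rw [Finset.sum_insert ha, Finset.sum_insert ha, mul_add]
      exact (hadd _ _).trans (add_le_add (hIntg _ _) ih)
  have := hsum Finset.univ
  rwa [Finset.univ_sum_single] at this

noncomputable def kmsBox (n : ℕ) (k : ℕ) : Finset (Fin n → ℤ) :=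
  Fintype.piFinset fun _ => Finset.Icc (-(k : ℤ)) k

lemma mem_kmsBox {n k : ℕ} {g : Fin n → ℤ} :
    g ∈ kmsBox n k ↔ ∀ i, -(k : ℤ) ≤ g i ∧ g i ≤ k := by
  simp [kmsBox]

lemma card_kmsBox (n k : ℕ) : (kmsBox n k).card = (2 * k + 1) ^ n := by
  simp only [kmsBox, Fintype.card_piFinset, Int.card_Icc, Finset.prod_const, Finset.card_univ,
    Fintype.card_fin]
  congr 1
  omega

lemma kms_cocycle_zero {G X : Type*} [AddGroup G] [AddAction G X] (Ω : G → X → ℝ)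
    (hΩ : ∀ (g h : G) (x : X), Ω g (h +ᵥ x) + Ω h x = Ω (g + h) x) (x : X) : Ω 0 x = 0 := by
  have := hΩ 0 0 x
  simpa using this

lemma kms_cocycle_neg {G X : Type*} [AddGroup G] [AddAction G X] (Ω : G → X → ℝ)
    (hΩ : ∀ (g h : G) (x : X), Ω g (h +ᵥ x) + Ω h x = Ω (g + h) x) (g : G) (x : X) :
    Ω (-g) x = - Ω g (-g +ᵥ x) := by
  have := hΩ g (-g) x
  rw [add_neg_cancel, kms_cocycle_zero Ω hΩ] at this
  linarith

lemma kms_integral_vadd {G X : Type*} [AddGroup G] [TopologicalSpace X]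
    [MeasurableSpace X] [BorelSpace X] [AddAction G X] [ContinuousConstVAdd G X]
    (μ : Measure X) (hμinv : ∀ g : G, Measure.map (fun x => g +ᵥ x) μ = μ)
    (f : X → ℝ) (g : G) :
    ∫ x, f (g +ᵥ x) ∂μ = ∫ x, f x ∂μ := by
  conv_rhs => rw [← hμinv g]
  exact ((Homeomorph.vadd g).measurableEmbedding.integral_map f).symm

/-- If a cocycle is a coboundary up to small `L¹` errors then it grows slowly in mean. -/
lemma kms_mean_growth
    {n : ℕ} {X : Type*} [TopologicalSpace X] [CompactSpace X]
    [TopologicalSpace.MetrizableSpace X] [MeasurableSpace X] [BorelSpace X]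
    [AddAction (Fin n → ℤ) X] [ContinuousConstVAdd (Fin n → ℤ) X]
    (Ω : (Fin n → ℤ) → X → ℝ) (hΩcont : ∀ g, Continuous (Ω g))
    (hΩ : ∀ (g h : Fin n → ℤ) (x : X), Ω g (h +ᵥ x) + Ω h x = Ω (g + h) x)
    (μ : Measure X) [IsProbabilityMeasure μ]
    (hμinv : ∀ g : Fin n → ℤ, Measure.map (fun x => g +ᵥ x) μ = μ)
    (ε : ℝ) (h : C(X, ℝ)) (hh : ∀ i : Fin n,
      ∫ x, |Ω (Pi.single i 1) x - (h ((Pi.single i 1 : Fin n → ℤ) +ᵥ x) - h x)| ∂μ ≤ ε)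
    (g : Fin n → ℤ) : ∫ x, |Ω g x| ∂μ ≤ 2 * ‖h‖ + ε * ∑ i, |(g i : ℝ)| := by
  have hcv : ∀ g : Fin n → ℤ, Continuous (fun x : X => g +ᵥ x) := fun g => continuous_const_vadd g
  have hIntg : ∀ f : X → ℝ, Continuous f → Integrable f μ := fun f hf =>
    hf.integrable_of_hasCompactSupport (HasCompactSupport.of_compactSpace _)
  let Ψ : (Fin n → ℤ) → X → ℝ := fun g x => Ω g x - (h (g +ᵥ x) - h x)
  have hΨc : ∀ g, Continuous (Ψ g) := fun g =>
    (hΩcont g).sub ((h.continuous.comp (hcv g)).sub h.continuous)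
  have hΨ : ∀ (g k : Fin n → ℤ) (x : X), Ψ g (k +ᵥ x) + Ψ k x = Ψ (g + k) x := by
    intro g k x
    have := hΩ g k x
    simp only [Ψ, vadd_vadd]
    linarith
  have key : ∫ x, |Ψ g x| ∂μ ≤ ε * ∑ i, |(g i : ℝ)| := by
    refine kms_subadd (fun g => ∫ x, |Ψ g x| ∂μ) ε ?_ ?_ ?_ hh g
    · simp [kms_cocycle_zero Ψ hΨ]
    · intro a b
      have h1 : ∫ x, |Ψ a (b +ᵥ x)| ∂μ = ∫ x, |Ψ a x| ∂μ :=
        kms_integral_vadd μ hμinv (fun x => |Ψ a x|) b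
      show ∫ x, |Ψ (a + b) x| ∂μ ≤ ∫ x, |Ψ a x| ∂μ + ∫ x, |Ψ b x| ∂μ
      rw [← h1, ← integral_add (hIntg (fun x => |Ψ a (b +ᵥ x)|) ((hΨc a).comp (hcv b)).abs) (hIntg _ (hΨc b).abs)]
      refine integral_mono (hIntg _ (hΨc _).abs)
        (hIntg _ (((hΨc a).comp (hcv b)).abs.add (hΨc b).abs)) fun x => ?_
      show |Ψ (a + b) x| ≤ |Ψ a (b +ᵥ x)| + |Ψ b x|
      rw [← hΨ]
      exact abs_add_le _ _
    · intro a
      show ∫ x, |Ψ (-a) x| ∂μ ≤ ∫ x, |Ψ a x| ∂μ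
      simp_rw [kms_cocycle_neg Ψ hΨ a, abs_neg]
      exact (kms_integral_vadd μ hμinv (fun x => |Ψ a x|) (-a)).le
  have : ∫ x, |Ω g x| ∂μ ≤ ∫ x, (2 * ‖h‖ + |Ψ g x|) ∂μ := by
    refine integral_mono (hIntg _ (hΩcont _).abs)
        (hIntg _ (continuous_const.add (hΨc g).abs)) fun x => ?_
    show |Ω g x| ≤ 2 * ‖h‖ + |Ψ g x|
    have h1 := h.norm_coe_le_norm (g +ᵥ x)
    have h2 := h.norm_coe_le_norm x
    rw [Real.norm_eq_abs] at h1 h2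
    have h3 : Ω g x = Ψ g x + h (g +ᵥ x) - h x := by simp only [Ψ]; ring
    rw [h3]
    have := abs_sub (Ψ g x + h (g +ᵥ x)) (h x)
    have := abs_add_le (Ψ g x) (h (g +ᵥ x))
    linarith
  rw [integral_add (integrable_const _) (hIntg _ (hΨc g).abs)] at this
  simp at this
  linarith

lemma kms_sup_growth
    {n : ℕ} {X : Type*} [TopologicalSpace X] [CompactSpace X]
    [AddAction (Fin n → ℤ) X]
    (Ω : (Fin n → ℤ) → X → ℝ) (hΩcont : ∀ g, Continuous (Ω g))
    (hΩ : ∀ (g h : Fin n → ℤ) (x : X), Ω g (h +ᵥ x) + Ω h x = Ω (g + h) x) :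
    ∃ C : ℝ, 0 ≤ C ∧ ∀ g x, |Ω g x| ≤ C * ∑ i, |(g i : ℝ)| := by
  let N : (Fin n → ℤ) → ℝ := fun g => ‖(⟨Ω g, hΩcont g⟩ : C(X, ℝ))‖
  have hN : ∀ g x, |Ω g x| ≤ N g := fun g x =>
    (⟨Ω g, hΩcont g⟩ : C(X, ℝ)).norm_coe_le_norm x
  have hN0 : ∀ g, 0 ≤ N g := fun g => norm_nonneg _
  refine ⟨∑ i, N (Pi.single i 1), Finset.sum_nonneg fun i _ => hN0 _, fun g x =>
    (hN g x).trans ?_⟩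
  refine kms_subadd N _ ?_ ?_ ?_ ?_ g
  · refine (ContinuousMap.norm_le _ le_rfl).2 fun x => ?_
    simp [kms_cocycle_zero Ω hΩ]
  · intro a b
    refine (ContinuousMap.norm_le _ (add_nonneg (hN0 a) (hN0 b))).2 fun x => ?_
    show |Ω (a + b) x| ≤ _
    rw [← hΩ]
    exact (abs_add_le _ _).trans (add_le_add (hN _ _) (hN _ _))
  · intro a
    refine (ContinuousMap.norm_le _ (hN0 a)).2 fun x => ?_
    show |Ω (-a) x| ≤ _
    rw [kms_cocycle_neg Ω hΩ, abs_neg]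
    exact hN _ _
  · intro i
    exact Finset.single_le_sum (f := fun i => N (Pi.single i 1)) (fun i _ => hN0 _)
      (Finset.mem_univ i)

/-- slow growth at a well chosen point -/
lemma kms_slow_point
    {n : ℕ} {X : Type*} [TopologicalSpace X] [CompactSpace X]
    [TopologicalSpace.MetrizableSpace X] [MeasurableSpace X] [BorelSpace X]
    [AddAction (Fin n → ℤ) X] [ContinuousConstVAdd (Fin n → ℤ) X]
    (Ω : (Fin n → ℤ) → X → ℝ) (hΩcont : ∀ g, Continuous (Ω g))
    (hΩ : ∀ (g h : Fin n → ℤ) (x : X), Ω g (h +ᵥ x) + Ω h x = Ω (g + h) x)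
    (μ : Measure X) [IsProbabilityMeasure μ]
    (hgrow : ∀ ε : ℝ, 0 < ε → ∃ A : ℝ, ∀ g : Fin n → ℤ,
      ∫ x, |Ω g x| ∂μ ≤ A + ε * ∑ i, |(g i : ℝ)|)
    (δ : ℝ) (hδ : 0 < δ) (J : ℕ) :
    ∃ j : ℕ, J ≤ j ∧ ∃ x : X, ∀ g ∈ kmsBox n (2 * j), |Ω g x| ≤ δ * j := by
  have hIntg : ∀ f : X → ℝ, Continuous f → Integrable f μ := fun f hf =>
    hf.integrable_of_hasCompactSupport (HasCompactSupport.of_compactSpace _)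
  obtain ⟨C, hC0, hC⟩ := kms_sup_growth Ω hΩcont hΩ
  obtain ⟨q0, hq0⟩ := exists_nat_ge (2 * (C * n) / δ)
  set q := q0 + 1 with hq
  have hq1 : C * n ≤ δ * q / 2 := by
    rw [div_le_iff₀ hδ] at hq0
    have : (q : ℝ) = q0 + 1 := by push_cast [hq]; rfl
    rw [this]; nlinarith
  set M : ℝ := ((kmsBox n (2 * q)).card : ℝ) with hM
  have hM1 : 0 < M := by
    rw [hM, card_kmsBox]; positivity
  have hqpos : (0 : ℝ) < q := by rw [hq]; positivity
  set ε : ℝ := δ / (8 * (n + 1) * M) with hε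
  have hεpos : 0 < ε := by positivity
  obtain ⟨A, hA⟩ := hgrow ε hεpos
  obtain ⟨s0, hs0⟩ := exists_nat_ge (4 * (M * A) / (δ * q))
  set s := s0 + J + 1 with hs
  have hspos : 0 < s := by omega
  have hsR : (0 : ℝ) < s := by exact_mod_cast hspos
  have hsA : M * A ≤ δ * q * s / 4 := by
    rw [div_le_iff₀ (by positivity)] at hs0
    have h1 : (s0 : ℝ) ≤ s := by exact_mod_cast (by omega : s0 ≤ s)
    nlinarith [mul_le_mul_of_nonneg_right h1 (by positivity : 0 ≤ δ * q)]
  refine ⟨q * s, by nlinarith, ?_⟩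
  obtain ⟨x, hx⟩ := exists_le_integral (μ := μ)
    (f := fun x => ∑ u ∈ kmsBox n (2 * q), |Ω ((s : ℤ) • u) x|)
    (hIntg _ (continuous_finsetSum _ fun u _ => (hΩcont _).abs))
  rw [integral_finsetSum _ (fun u _ => hIntg _ (hΩcont _).abs)] at hx
  have hbound : ∀ u ∈ kmsBox n (2 * q), ∫ x, |Ω ((s : ℤ) • u) x| ∂μ ≤
      A + ε * (n * (2 * q * s)) := by
    intro u hu
    refine (hA _).trans ?_
    gcongr
    calc ∑ i, |(((s : ℤ) • u) i : ℝ)| ≤ ∑ i : Fin n, (2 * q * s : ℝ) := by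
          refine Finset.sum_le_sum fun i _ => ?_
          have := mem_kmsBox.1 hu i
          have h1 : |u i| ≤ ((2 * q : ℕ) : ℤ) := abs_le.2 this
          have h2 : |(u i : ℝ)| ≤ 2 * q := by exact_mod_cast h1
          simp only [Pi.smul_apply, smul_eq_mul, Int.cast_mul, Int.cast_natCast, abs_mul]
          rw [abs_of_pos hsR]
          nlinarith
      _ = n * (2 * q * s) := by simp
  have hx2 := hx.trans (Finset.sum_le_card_nsmul _ _ _ hbound)
  rw [nsmul_eq_mul, ← hM, mul_add M] at hx2
  have hMe : M * (ε * (n * (2 * q * s))) ≤ δ * q * s / 4 := by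
    have : M * ε = δ / (8 * (n + 1)) := by rw [hε]; field_simp
    rw [← mul_assoc, this, div_mul_eq_mul_div, div_le_iff₀ (by positivity)]
    have : 0 < δ * q * s := by positivity
    nlinarith
  refine ⟨x, fun g hg => ?_⟩
  rw [mem_kmsBox] at hg
  let u : Fin n → ℤ := fun i => g i / s
  let r : Fin n → ℤ := fun i => g i % s
  have hsZ : (0 : ℤ) < s := by exact_mod_cast hspos
  have hg' : g = r + (s : ℤ) • u := by
    ext i
    simp [r, u, Int.emod_add_mul_ediv]
  have hu : u ∈ kmsBox n (2 * q) := by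
    rw [mem_kmsBox]
    intro i
    have := hg i
    push_cast at this ⊢
    constructor
    · refine (Int.le_ediv_iff_mul_le hsZ).2 ?_
      linarith
    · refine Int.ediv_le_of_le_mul hsZ ?_
      linarith
  have hΩu : |Ω ((s : ℤ) • u) x| ≤ δ * q * s / 2 := by
    have := Finset.single_le_sum (f := fun u => |Ω ((s : ℤ) • u) x|)
      (fun u _ => abs_nonneg _) hu
    linarith
  have hΩr : |Ω r ((s : ℤ) • u +ᵥ x)| ≤ δ * q * s / 2 := by
    refine (hC _ _).trans ?_
    have : ∑ i, |(r i : ℝ)| ≤ n * s := by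
      calc ∑ i, |(r i : ℝ)| ≤ ∑ i : Fin n, (s : ℝ) := by
            refine Finset.sum_le_sum fun i _ => ?_
            have h1 : 0 ≤ r i := Int.emod_nonneg _ hsZ.ne'
            have h2 : r i < s := Int.emod_lt_of_pos _ hsZ
            rw [abs_of_nonneg (by exact_mod_cast h1)]
            exact_mod_cast h2.le
        _ = n * s := by simp
    calc C * ∑ i, |(r i : ℝ)| ≤ C * (n * s) := by gcongr
      _ = (C * n) * s := by ring
      _ ≤ (δ * q / 2) * s := by gcongr
      _ = _ := by ring
  rw [hg', ← hΩ]
  refine (abs_add_le _ _).trans ?_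
  push_cast
  linarith

lemma kms_sum_diff {ι : Type*} [DecidableEq ι] (A B C D : Finset ι) (hAC : A ⊆ C) (hBC : B ⊆ C)
    (hDA : D ⊆ A) (hDB : D ⊆ B) (F a : ι → ℝ) (hF : ∀ i, |F i| ≤ a i) :
    |∑ i ∈ A, F i - ∑ i ∈ B, F i| ≤ 2 * (∑ i ∈ C, a i - ∑ i ∈ D, a i) := by
  have ha : ∀ i, 0 ≤ a i := fun i => (abs_nonneg _).trans (hF i)
  have key : ∀ A : Finset ι, A ⊆ C → |∑ i ∈ A \ D, F i| ≤ ∑ i ∈ C \ D, a i := by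
    intro A hA
    refine (Finset.abs_sum_le_sum_abs _ _).trans ?_
    refine (Finset.sum_le_sum fun i _ => hF i).trans ?_
    exact Finset.sum_le_sum_of_subset_of_nonneg (Finset.sdiff_subset_sdiff hA le_rfl)
      fun i _ _ => ha i
  rw [← Finset.sum_sdiff hDA, ← Finset.sum_sdiff hDB, ← Finset.sum_sdiff (hDA.trans hAC)]
  have h1 := abs_le.1 (key A hAC)
  have h2 := abs_le.1 (key B hBC)
  rw [abs_le]
  constructor <;> linarith [h1.1, h1.2, h2.1, h2.2]

lemma kmsBox_mono {n k l : ℕ} (h : k ≤ l) : kmsBox n k ⊆ kmsBox n l := by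
  intro g hg
  rw [mem_kmsBox] at hg ⊢
  intro i
  have := hg i
  omega

/-- elementary growth argument: some step has small relative growth -/
lemma kms_growth {n : ℕ} (η β : ℝ) (hη : 0 < η) :
    ∃ δ : ℝ, 0 < δ ∧ ∃ J : ℕ, ∀ j : ℕ, J ≤ j → ∀ w : (Fin n → ℤ) → ℝ, w 0 = 0 →
      (∀ g ∈ kmsBox n (2 * j), |w g| ≤ δ * j) →
      ∃ k : ℕ, ∑ g ∈ kmsBox n (k + 2), Real.exp (β * w g) - ∑ g ∈ kmsBox n k, Real.exp (β * w g)
        ≤ η * ∑ g ∈ kmsBox n (k + 1), Real.exp (β * w g) := by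
  set r : ℝ := Real.sqrt (1 + η) with hr
  have hr1 : 1 < r := by rw [hr]; exact Real.lt_sqrt_of_sq_lt (by linarith)
  have hr2 : r ^ 2 = 1 + η := Real.sq_sqrt (by linarith)
  have hlog : 0 < Real.log r := Real.log_pos hr1
  have hlim := tendsto_pow_const_div_const_pow_of_one_lt n hr1
  have hev : ∀ᶠ j : ℕ in Filter.atTop, (j : ℝ) ^ n / r ^ j < 1 / 5 ^ n :=
    hlim.eventually (gt_mem_nhds (by positivity))
  obtain ⟨J, hJ⟩ := Filter.eventually_atTop.1 hev
  refine ⟨Real.log r / (|β| + 1), by positivity, J + 1, fun j hj w hw0 hw => ?_⟩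
  by_contra! hcon
  set S : ℕ → ℝ := fun k => ∑ g ∈ kmsBox n k, Real.exp (β * w g) with hS
  have hSmono : ∀ k, S k ≤ S (k + 1) := fun k =>
    Finset.sum_le_sum_of_subset_of_nonneg (kmsBox_mono (Nat.le_succ k))
      fun i _ _ => (Real.exp_pos _).le
  have hstep : ∀ k, (1 + η) * S k ≤ S (k + 2) := by
    intro k
    have h1 : η * S (k + 1) < S (k + 2) - S k := hcon k
    nlinarith [hSmono k]
  have h0 : 1 ≤ S 0 := by
    have h0m : (0 : Fin n → ℤ) ∈ kmsBox n 0 := by rw [mem_kmsBox]; simp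
    have := Finset.single_le_sum (f := fun g => Real.exp (β * w g))
      (fun i _ => (Real.exp_pos _).le) h0m
    simpa [hw0] using this
  have hlow : ∀ i, (1 + η) ^ i ≤ S (2 * i) := by
    intro i
    induction i with
    | zero => simpa using h0
    | succ i ih =>
      have := hstep (2 * i)
      rw [pow_succ, mul_comm]
      refine le_trans ?_ this
      gcongr
  have hup : S (2 * j) ≤ (4 * j + 1) ^ n * r ^ j := by
    have : ∀ g ∈ kmsBox n (2 * j), Real.exp (β * w g) ≤ r ^ j := by
      intro g hg
      have h1 := hw g hg
      have h2 : β * w g ≤ j * Real.log r := by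
        calc β * w g ≤ |β * w g| := le_abs_self _
          _ = |β| * |w g| := abs_mul _ _
          _ ≤ (|β| + 1) * (Real.log r / (|β| + 1) * j) := by
              gcongr; linarith
          _ = j * Real.log r := by field_simp
      calc Real.exp (β * w g) ≤ Real.exp (j * Real.log r) := Real.exp_le_exp.2 h2
        _ = r ^ j := by rw [Real.exp_nat_mul, Real.exp_log (by linarith)]
    have := Finset.sum_le_card_nsmul _ _ _ this
    rw [card_kmsBox, nsmul_eq_mul] at this
    refine this.trans (le_of_eq ?_)
    push_cast
    ring
  have h3 := (hlow j).trans hup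
  rw [← hr2, ← pow_mul, mul_comm 2 j, pow_mul, sq] at h3
  have hrj : 0 < r ^ j := by positivity
  have h4 : r ^ j ≤ (4 * j + 1) ^ n := le_of_mul_le_mul_right h3 hrj
  have h5 := hJ j (by omega)
  rw [div_lt_div_iff₀ hrj (by positivity), one_mul, ← mul_pow] at h5
  have h6 : ((4 : ℝ) * j + 1) ^ n ≤ (j * 5 : ℝ) ^ n := by
    have : (1 : ℝ) ≤ j := by exact_mod_cast (by omega : 1 ≤ j)
    gcongr
    linarith
  linarith

/-- approximately conformal measures -/
lemma kms_approx
    {n : ℕ} {X : Type*} [TopologicalSpace X] [CompactSpace X]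
    [TopologicalSpace.MetrizableSpace X] [MeasurableSpace X] [BorelSpace X]
    [AddAction (Fin n → ℤ) X]
    (Ω : (Fin n → ℤ) → X → ℝ)
    (hΩ : ∀ (g h : Fin n → ℤ) (x : X), Ω g (h +ᵥ x) + Ω h x = Ω (g + h) x)
    (β η : ℝ) (x : X) (k : ℕ)
    (hk : ∑ g ∈ kmsBox n (k + 2), Real.exp (β * Ω g x) - ∑ g ∈ kmsBox n k, Real.exp (β * Ω g x)
        ≤ η * ∑ g ∈ kmsBox n (k + 1), Real.exp (β * Ω g x)) :
    ∃ m : ProbabilityMeasure X, ∀ (i : Fin n) (f : C(X, ℝ)),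
      |∫ y, f ((Pi.single i 1 : Fin n → ℤ) +ᵥ y) * Real.exp (β * Ω (Pi.single i 1) y)
        ∂(m : Measure X) - ∫ y, f y ∂(m : Measure X)| ≤ 2 * η * ‖f‖ := by
  set a : (Fin n → ℤ) → ℝ := fun g => Real.exp (β * Ω g x) with ha
  have hapos : ∀ g, 0 < a g := fun g => Real.exp_pos _
  set B := kmsBox n (k + 1) with hB
  have h0B : (0 : Fin n → ℤ) ∈ B := by
    rw [hB, mem_kmsBox]; intro i; constructor <;> simp <;> omega
  set S := ∑ g ∈ B, a g with hS
  have hSpos : 0 < S := Finset.sum_pos (fun g _ => hapos g) ⟨0, h0B⟩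
  set m : Measure X := ∑ g ∈ B, ENNReal.ofReal (a g / S) • Measure.dirac (g +ᵥ x) with hm
  have hmp : IsProbabilityMeasure m := by
    constructor
    rw [hm]
    simp only [Measure.coe_finsetSum, Finset.sum_apply, Measure.smul_apply, measure_univ,
      smul_eq_mul, mul_one]
    rw [← ENNReal.ofReal_sum_of_nonneg (fun g _ => (div_pos (hapos g) hSpos).le),
      ← Finset.sum_div, div_self hSpos.ne', ENNReal.ofReal_one]
  have hintm : ∀ F : X → ℝ, ∫ y, F y ∂m = (∑ g ∈ B, a g * F (g +ᵥ x)) / S := by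
    intro F
    rw [hm, integral_finsetSum_measure, Finset.sum_div]
    · refine Finset.sum_congr rfl fun g _ => ?_
      rw [integral_smul_measure, integral_dirac,
        ENNReal.toReal_ofReal (div_pos (hapos g) hSpos).le, smul_eq_mul]
      ring
    · intro g _
      refine Integrable.smul_measure ?_ ENNReal.ofReal_ne_top
      exact integrable_dirac (by simp)
  refine ⟨⟨m, hmp⟩, fun i f => ?_⟩
  set e : Fin n → ℤ := Pi.single i 1 with he
  show |∫ y, f (e +ᵥ y) * Real.exp (β * Ω e y) ∂m - ∫ y, f y ∂m| ≤ _
  rw [hintm, hintm, ← sub_div, abs_div, abs_of_pos hSpos, div_le_iff₀ hSpos]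
  have h1 : ∑ g ∈ B, a g * (f (e +ᵥ g +ᵥ x) * Real.exp (β * Ω e (g +ᵥ x)))
      = ∑ g ∈ B.map (addLeftEmbedding e), a g * f (g +ᵥ x) := by
    rw [Finset.sum_map]
    refine Finset.sum_congr rfl fun g _ => ?_
    simp only [addLeftEmbedding_apply, ha]
    rw [← hΩ e g x, mul_add, Real.exp_add, vadd_vadd]
    ring
  rw [h1]
  have hei : ∀ l, 0 ≤ e l ∧ e l ≤ 1 := by
    intro l
    rw [he]
    by_cases h : l = i
    · subst h; simp
    · simp [h]
  have h2 := kms_sum_diff (B.map (addLeftEmbedding e)) B (kmsBox n (k + 2)) (kmsBox n k)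
    (by
      intro g hg
      rw [Finset.mem_map] at hg
      obtain ⟨b, hb, rfl⟩ := hg
      rw [hB, mem_kmsBox] at hb
      rw [mem_kmsBox]
      intro l
      have := hb l
      have := hei l
      simp only [addLeftEmbedding_apply, Pi.add_apply]
      push_cast at *
      omega)
    (kmsBox_mono (by omega))
    (by
      intro g hg
      rw [mem_kmsBox] at hg
      refine Finset.mem_map.2 ⟨-e + g, ?_, by simp⟩
      rw [hB, mem_kmsBox]
      intro l
      have := hg l
      have := hei l
      simp only [Pi.add_apply, Pi.neg_apply]
      push_cast at *
      omega)
    (kmsBox_mono (by omega))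
    (fun g => a g * f (g +ᵥ x)) (fun g => a g * ‖f‖) (by
      intro g
      rw [abs_mul, abs_of_pos (hapos g)]
      exact mul_le_mul_of_nonneg_left (f.norm_coe_le_norm _) (hapos g).le)
  refine h2.trans ?_
  rw [← Finset.sum_mul, ← Finset.sum_mul, ← sub_mul]
  nlinarith [mul_le_mul_of_nonneg_right hk (norm_nonneg f)]

/-- conformality for generators gives conformality -/
lemma kms_generators
    {n : ℕ} {X : Type*} [TopologicalSpace X] [MeasurableSpace X]
    [AddAction (Fin n → ℤ) X] [ContinuousConstVAdd (Fin n → ℤ) X]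
    (Ω : (Fin n → ℤ) → X → ℝ) (hΩcont : ∀ g, Continuous (Ω g))
    (hΩ : ∀ (g h : Fin n → ℤ) (x : X), Ω g (h +ᵥ x) + Ω h x = Ω (g + h) x)
    (β : ℝ) (m : Measure X)
    (hgen : ∀ (i : Fin n) (f : C(X, ℝ)),
      ∫ y, f ((Pi.single i 1 : Fin n → ℤ) +ᵥ y) * Real.exp (β * Ω (Pi.single i 1) y) ∂m
        = ∫ y, f y ∂m) : ConformalMeasureAdd Ω β m := by
  let T : (Fin n → ℤ) → C(X, ℝ) → C(X, ℝ) := fun g f =>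
    ⟨fun y => f (g +ᵥ y) * Real.exp (β * Ω g y),
      (f.continuous.comp (continuous_const_vadd g)).mul
        (Real.continuous_exp.comp (continuous_const.mul (hΩcont g)))⟩
  have hT : ∀ g h f, T h (T g f) = T (g + h) f := by
    intro g h f
    ext y
    simp only [T, ContinuousMap.coe_mk]
    rw [← hΩ, mul_add, Real.exp_add, vadd_vadd, mul_assoc]
  have hT0 : ∀ f, T 0 f = f := by
    intro f
    ext y
    simp [T, kms_cocycle_zero Ω hΩ]
  let H : AddSubgroup (Fin n → ℤ) :=
    { carrier := {g | ∀ f : C(X, ℝ), ∫ y, T g f y ∂m = ∫ y, f y ∂m}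
      zero_mem' := by intro f; rw [hT0]
      add_mem' := by
        intro a b ha hb f
        rw [← hT, hb, ha]
      neg_mem' := by
        intro a ha f
        rw [← ha (T (-a) f), hT, neg_add_cancel, hT0] }
  have hmem : ∀ g, g ∈ H := by
    intro g
    rw [← Finset.univ_sum_single g]
    refine H.sum_mem fun i _ => ?_
    have : (Pi.single i (g i) : Fin n → ℤ) = g i • Pi.single i 1 := by
      rw [← Pi.single_smul]; simp
    rw [this]
    exact H.zsmul_mem (fun f => hgen i f) _
  exact fun g f => hmem g f

/-- For an action of `ℤⁿ` with a continuous 1-cocycle `Ω`: if there is an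
ergodic invariant probability measure `μ` with `∫ Ω(g,·) dμ = 0` for all `g`, then for
every `β` there is an `e^{β·Ω}`-conformal probability measure (the KMS spectrum is `ℝ`). -/
theorem kms_spectrum_full_of_ergodic_zero_mean
    {n : ℕ} {X : Type*} [TopologicalSpace X] [CompactSpace X]
    [TopologicalSpace.MetrizableSpace X] [MeasurableSpace X] [BorelSpace X]
    [AddAction (Fin n → ℤ) X] [ContinuousConstVAdd (Fin n → ℤ) X]
    (Ω : (Fin n → ℤ) → X → ℝ) (hΩcont : ∀ g, Continuous (Ω g))
    (hΩ : ∀ (g h : Fin n → ℤ) (x : X), Ω g (h +ᵥ x) + Ω h x = Ω (g + h) x)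
    (μ : Measure X) [IsProbabilityMeasure μ]
    (hμinv : ∀ g : Fin n → ℤ, Measure.map (fun x => g +ᵥ x) μ = μ)
    (herg : ∀ B : Set X, MeasurableSet B →
      (∀ g : Fin n → ℤ, (fun x => g +ᵥ x) ⁻¹' B = B) → μ B = 0 ∨ μ B = 1)
    (hmean : ∀ g : Fin n → ℤ, ∫ x, Ω g x ∂μ = 0) :
    ∀ β : ℝ, ∃ m : Measure X, IsProbabilityMeasure m ∧ ConformalMeasureAdd Ω β m := by
  intro β
  have hgrow : ∀ ε : ℝ, 0 < ε → ∃ A : ℝ, ∀ g : Fin n → ℤ,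
      ∫ x, |Ω g x| ∂μ ≤ A + ε * ∑ i, |(g i : ℝ)| := by
    intro ε hε
    obtain ⟨h, hh⟩ := kms_coboundary Ω hΩcont hΩ μ hμinv herg hmean ε hε
    exact ⟨2 * ‖h‖, kms_mean_growth Ω hΩcont hΩ μ hμinv ε h hh⟩
  have happrox : ∀ N : ℕ, ∃ m : ProbabilityMeasure X, ∀ (i : Fin n) (f : C(X, ℝ)),
      |∫ y, f ((Pi.single i 1 : Fin n → ℤ) +ᵥ y) * Real.exp (β * Ω (Pi.single i 1) y)
        ∂(m : Measure X) - ∫ y, f y ∂(m : Measure X)| ≤ 2 * (1 / ((N : ℝ) + 1)) * ‖f‖ := by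
    intro N
    obtain ⟨δ, hδ, J, hJ⟩ := kms_growth (n := n) (1 / ((N : ℝ) + 1)) β (by positivity)
    obtain ⟨j, hj, x, hx⟩ := kms_slow_point Ω hΩcont hΩ μ hgrow δ hδ J
    obtain ⟨k, hk⟩ := hJ j hj (fun g => Ω g x) (kms_cocycle_zero Ω hΩ x) hx
    exact kms_approx Ω hΩ β _ x k hk
  choose ms hms using happrox
  letI := TopologicalSpace.metrizableSpaceMetric X
  let F : Ultrafilter ℕ := Filter.hyperfilter ℕ
  obtain ⟨m, -, hm⟩ := isCompact_univ (X := ProbabilityMeasure X).ultrafilter_le_nhds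
    (F.map ms) (by simp)
  have hm' : Filter.Tendsto ms F (nhds m) := hm
  rw [ProbabilityMeasure.tendsto_iff_forall_integral_tendsto] at hm'
  have hlim : ∀ f : C(X, ℝ), Filter.Tendsto (fun N => ∫ y, f y ∂(ms N : Measure X)) F
      (nhds (∫ y, f y ∂(m : Measure X))) := fun f =>
    hm' (BoundedContinuousFunction.mkOfCompact f)
  refine ⟨m, m.2, kms_generators Ω hΩcont hΩ β m fun i f => ?_⟩
  let Tf : C(X, ℝ) := ⟨fun y => f ((Pi.single i 1 : Fin n → ℤ) +ᵥ y) *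
    Real.exp (β * Ω (Pi.single i 1) y),
    (f.continuous.comp (continuous_const_vadd _)).mul
        (Real.continuous_exp.comp (continuous_const.mul (hΩcont _)))⟩
  have h1 := (hlim Tf).sub (hlim f)
  have h2 : Filter.Tendsto (fun N => ∫ y, Tf y ∂(ms N : Measure X) - ∫ y, f y ∂(ms N : Measure X))
      F (nhds 0) := by
    refine squeeze_zero_norm (fun N => hms N i f) ?_
    have h3 : Filter.Tendsto (fun N : ℕ => 2 * (1 / ((N : ℝ) + 1)) * ‖f‖) Filter.atTop
        (nhds (2 * 0 * ‖f‖)) :=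
      ((tendsto_one_div_add_atTop_nhds_zero_nat (𝕜 := ℝ)).const_mul 2).mul_const _
    simp only [mul_zero, zero_mul] at h3
    exact h3.mono_left (Nat.hyperfilter_le_atTop)
  exact sub_eq_zero.1 (tendsto_nhds_unique h1 h2)
end

section
/- Let ℤⁿ act on a compact metrizable space X, uniquely ergodically with unique invariant probability measure μ, and let Ω : ℤⁿ × X → ℝ be a continuous 1-cocycle. Fix a nontrivial a ∈ ℤⁿ and x ∈ X, and suppose limsup_{g→∞} Ω(g,x)/|g| ≤ 0. Then ∫_X Ω(a,y) dμ(y) ≤ 0. -/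
open MeasureTheory Filter

section Helpers

open scoped Topology BoundedContinuousFunction ENNReal

variable {G X : Type*} [AddCommGroup G] [TopologicalSpace X] [CompactSpace X]
    [TopologicalSpace.MetrizableSpace X] [MeasurableSpace X] [BorelSpace X]
    [AddAction G X] [ContinuousConstVAdd G X]

/-- Limit of Cesaro averages of a measure along `b`. -/
theorem exists_cesaro_limit (ν : Measure X) [IsProbabilityMeasure ν] (b : G) :
    ∃ ν' : Measure X, IsProbabilityMeasure ν' ∧ ∀ f : X → ℝ, Continuous f →
      Tendsto (fun m : ℕ => ((m : ℝ) + 1)⁻¹ *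
        ∑ k ∈ Finset.range (m + 1), ∫ y, f ((k • b) +ᵥ y) ∂ν)
        (hyperfilter ℕ : Filter ℕ) (𝓝 (∫ y, f y ∂ν')) := by
  have hmeas : ∀ g : G, Measurable (fun y : X => g +ᵥ y) :=
    fun g => (continuous_const_vadd g).measurable
  have hp : ∀ g : G, IsProbabilityMeasure (ν.map (fun y : X => g +ᵥ y)) :=
    fun g => Measure.isProbabilityMeasure_map (hmeas g).aemeasurable
  let M : ℕ → Measure X := fun m => ((m : ℝ≥0∞) + 1)⁻¹ •
    ∑ k ∈ Finset.range (m + 1), ν.map (fun y : X => (k • b) +ᵥ y)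
  have hM : ∀ m, IsProbabilityMeasure (M m) := by
    intro m
    constructor
    simp only [M, Measure.smul_apply, Measure.finsetSum_apply, measure_univ, smul_eq_mul,
      Finset.sum_const, Finset.card_range, nsmul_eq_mul, mul_one]
    push_cast
    exact ENNReal.inv_mul_cancel (by simp) (by simp)
  let P : ℕ → ProbabilityMeasure X := fun m => ⟨M m, hM m⟩
  obtain ⟨Q, -, hQ⟩ := isCompact_univ (X := ProbabilityMeasure X).ultrafilter_le_nhds
    ((hyperfilter ℕ).map P) (by simp)
  refine ⟨Q, inferInstance, fun f hf => ?_⟩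
  have hT : Tendsto P (hyperfilter ℕ : Filter ℕ) (𝓝 Q) := hQ
  rw [ProbabilityMeasure.tendsto_iff_forall_integral_tendsto] at hT
  have := hT (BoundedContinuousFunction.mkOfCompact ⟨f, hf⟩)
  simp only [BoundedContinuousFunction.mkOfCompact_apply, ContinuousMap.coe_mk] at this
  refine this.congr fun m => ?_
  change ∫ y, f y ∂(M m) = _
  simp only [M]
  rw [integral_smul_measure, integral_finsetSum_measure]
  · simp only [smul_eq_mul]
    congr 1
    · rw [ENNReal.toReal_inv, ENNReal.toReal_add (by simp) (by simp)]; simp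
    · refine Finset.sum_congr rfl fun k _ => ?_
      rw [integral_map (hmeas _).aemeasurable hf.aestronglyMeasurable]
  · intro k _
    haveI := hp (k • b)
    exact hf.integrable_of_hasCompactSupport (HasCompactSupport.of_compactSpace f)

theorem map_eq_of_integral (ν : Measure X) [IsProbabilityMeasure ν] (c : G)
    (h : ∀ f : X → ℝ, Continuous f → ∫ y, f (c +ᵥ y) ∂ν = ∫ y, f y ∂ν) :
    ν.map (fun y : X => c +ᵥ y) = ν := by
  have hm : Measurable (fun y : X => c +ᵥ y) := (continuous_const_vadd c).measurable
  haveI := Measure.isProbabilityMeasure_map (μ := ν) hm.aemeasurable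
  apply ext_of_forall_integral_eq_of_IsFiniteMeasure
  intro f
  rw [integral_map hm.aemeasurable f.continuous.aestronglyMeasurable]
  exact h f f.continuous

theorem integral_of_map_eq (ν : Measure X) (c : G)
    (h : ν.map (fun y : X => c +ᵥ y) = ν) (f : X → ℝ) (hf : Continuous f) :
    ∫ y, f (c +ᵥ y) ∂ν = ∫ y, f y ∂ν := by
  have hm : Measurable (fun y : X => c +ᵥ y) := (continuous_const_vadd c).measurable
  conv_rhs => rw [← h]
  rw [integral_map hm.aemeasurable hf.aestronglyMeasurable]

/-- One averaging step. -/
theorem averaging_step (ν : Measure X) [IsProbabilityMeasure ν] (b : G) (F : X → ℝ)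
    (hF : Continuous F) (hν : ∀ g : G, ∫ y, F (g +ᵥ y) ∂ν ≤ 0) :
    ∃ ν' : Measure X, IsProbabilityMeasure ν' ∧ (∀ g : G, ∫ y, F (g +ᵥ y) ∂ν' ≤ 0) ∧
      ν'.map (fun y : X => b +ᵥ y) = ν' ∧
      ∀ c : G, ν.map (fun y : X => c +ᵥ y) = ν → ν'.map (fun y : X => c +ᵥ y) = ν' := by
  obtain ⟨ν', hp, hlim⟩ := exists_cesaro_limit ν b
  refine ⟨ν', hp, fun g => ?_, ?_, fun c hc => ?_⟩
  · refine le_of_tendsto (hlim (fun y => F (g +ᵥ y)) (hF.comp (continuous_const_vadd g)))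
      (Eventually.of_forall fun m => ?_)
    refine mul_nonpos_of_nonneg_of_nonpos (by positivity) (Finset.sum_nonpos fun k _ => ?_)
    simp only [← add_vadd]
    exact hν _
  · apply map_eq_of_integral
    intro f hf
    have h1 := (hlim (fun y => f (b +ᵥ y)) (hf.comp (continuous_const_vadd b))).sub (hlim f hf)
    obtain ⟨C, hC⟩ := (isCompact_univ (X := X)).exists_bound_of_continuousOn hf.continuousOn
    have hb : ∀ g : G, |∫ y, f (g +ᵥ y) ∂ν| ≤ C := by
      intro g
      have := norm_integral_le_of_norm_le_const (μ := ν) (f := fun y => f (g +ᵥ y)) (C := C)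
        (Eventually.of_forall fun y => hC _ trivial)
      simpa using this
    have h0 : Tendsto (fun m : ℕ => ((m : ℝ) + 1)⁻¹ * (2 * C)) (hyperfilter ℕ : Filter ℕ)
        (𝓝 0) := by
      have := (tendsto_one_div_add_atTop_nhds_zero_nat (𝕜 := ℝ)).mul_const (2 * C)
      simp only [one_div, zero_mul] at this
      exact this.mono_left Nat.hyperfilter_le_atTop
    have h2 := squeeze_zero_norm (fun m => ?_) h0 (f := fun m : ℕ => ((m : ℝ) + 1)⁻¹ *
        ∑ k ∈ Finset.range (m + 1), ∫ y, f (b +ᵥ ((k • b) +ᵥ y)) ∂ν - ((m : ℝ) + 1)⁻¹ *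
        ∑ k ∈ Finset.range (m + 1), ∫ y, f ((k • b) +ᵥ y) ∂ν)
    · have := tendsto_nhds_unique h1 h2
      linarith
    · have e : ∀ k : ℕ, ∫ y, f (b +ᵥ ((k • b) +ᵥ y)) ∂ν = ∫ y, f (((k + 1) • b) +ᵥ y) ∂ν := by
        intro k
        simp only [← add_vadd, succ_nsmul']
      simp only [e]
      rw [← mul_sub, ← Finset.sum_sub_distrib,
        Finset.sum_range_sub (fun k => ∫ y, f ((k • b) +ᵥ y) ∂ν), norm_mul,
        Real.norm_of_nonneg (by positivity)]
      refine mul_le_mul_of_nonneg_left ?_ (by positivity)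
      have a1 := abs_le.1 (hb ((m + 1) • b))
      have a2 := abs_le.1 (hb (0 • b))
      have a3 := hb (0 • b)
      rw [Real.norm_eq_abs, abs_le]
      constructor <;> linarith
  · apply map_eq_of_integral
    intro f hf
    refine tendsto_nhds_unique (hlim (fun y => f (c +ᵥ y)) (hf.comp (continuous_const_vadd c)))
      ((hlim f hf).congr fun m => ?_)
    congr 1
    refine Finset.sum_congr rfl fun k _ => ?_
    have := integral_of_map_eq ν c hc (fun y => f ((k • b) +ᵥ y))
      (hf.comp (continuous_const_vadd _))
    rw [← this]
    simp only [← add_vadd, add_comm]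

theorem averaging_finset (ν : Measure X) [IsProbabilityMeasure ν] (F : X → ℝ)
    (hF : Continuous F) (hν : ∀ g : G, ∫ y, F (g +ᵥ y) ∂ν ≤ 0) (S : Finset G) :
    ∃ ν' : Measure X, IsProbabilityMeasure ν' ∧ (∀ g : G, ∫ y, F (g +ᵥ y) ∂ν' ≤ 0) ∧
      ∀ c ∈ S, ν'.map (fun y : X => c +ᵥ y) = ν' := by
  classical
  induction S using Finset.induction_on with
  | empty => exact ⟨ν, inferInstance, hν, by simp⟩
  | insert b S _ ih =>
    obtain ⟨ν₁, hp, h1, h2⟩ := ih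
    obtain ⟨ν₂, hp', h1', hb, h2'⟩ := averaging_step ν₁ b F hF h1
    refine ⟨ν₂, hp', h1', fun c hc => ?_⟩
    rcases Finset.mem_insert.1 hc with rfl | hc
    · exact hb
    · exact h2' c (h2 c hc)

/-- The set of elements fixing `ν` as a subgroup. -/
def stabSubgroup (G : Type*) [AddCommGroup G] [AddAction G X] [ContinuousConstVAdd G X]
    (ν : Measure X) : AddSubgroup G where
  carrier := {g | ν.map (fun y : X => g +ᵥ y) = ν}
  zero_mem' := by simp
  add_mem' := by
    intro g h hg hh
    simp only [Set.mem_setOf_eq] at *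
    have : (fun y : X => (g + h) +ᵥ y) = (fun y => g +ᵥ y) ∘ (fun y => h +ᵥ y) := by
      ext y; simp [add_vadd]
    rw [this, ← Measure.map_map (continuous_const_vadd g).measurable
      (continuous_const_vadd h).measurable, hh, hg]
  neg_mem' := by
    intro g hg
    simp only [Set.mem_setOf_eq] at *
    conv_lhs => rw [← hg]
    rw [Measure.map_map (continuous_const_vadd _).measurable
      (continuous_const_vadd _).measurable]
    have : (fun y : X => -g +ᵥ y) ∘ (fun y => g +ᵥ y) = id := by
      ext y; simp
    rw [this, Measure.map_id]

theorem sum_single_zsmul {n : ℕ} (g : Fin n → ℤ) :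
    ∑ i, g i • (Pi.single i 1 : Fin n → ℤ) = g := by
  ext j
  simp [Finset.sum_apply, Pi.single_apply]

/-- Linear growth of cocycles. -/
theorem cocycle_growth {n : ℕ} [AddAction (Fin n → ℤ) X] [ContinuousConstVAdd (Fin n → ℤ) X]
    (Ω : (Fin n → ℤ) → X → ℝ) (hΩcont : ∀ g, Continuous (Ω g))
    (hΩ : ∀ (g h : Fin n → ℤ) (x : X), Ω g (h +ᵥ x) + Ω h x = Ω (g + h) x) :
    ∃ C : ℝ, ∀ g x, |Ω g x| ≤ C * ‖g‖ := by
  let D : (Fin n → ℤ) → ℝ := fun g => ‖(⟨Ω g, hΩcont g⟩ : C(X, ℝ))‖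
  have hD : ∀ g x, |Ω g x| ≤ D g := fun g x =>
    ContinuousMap.norm_coe_le_norm (⟨Ω g, hΩcont g⟩ : C(X, ℝ)) x
  have hD0 : ∀ g, 0 ≤ D g := fun g => norm_nonneg _
  have hle : ∀ g c, 0 ≤ c → (∀ x, |Ω g x| ≤ c) → D g ≤ c := fun g c hc h =>
    (ContinuousMap.norm_le _ hc).2 h
  have hz : ∀ x, Ω 0 x = 0 := by
    intro x
    have := hΩ 0 0 x
    simp at this
    exact this
  have hDz : D 0 ≤ 0 := hle _ _ le_rfl (by simp [hz])
  have hadd : ∀ g h, D (g + h) ≤ D g + D h := by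
    intro g h
    refine hle _ _ (add_nonneg (hD0 _) (hD0 _)) fun x => ?_
    rw [← hΩ]
    exact (abs_add_le _ _).trans (add_le_add (hD _ _) (hD _ _))
  have hneg : ∀ g, D (-g) ≤ D g := by
    intro g
    refine hle _ _ (hD0 _) fun x => ?_
    have := hΩ g (-g) x
    rw [add_neg_cancel, hz] at this
    rw [show Ω (-g) x = - Ω g (-g +ᵥ x) by linarith, abs_neg]
    exact hD _ _
  have hnat : ∀ (k : ℕ) g, D (k • g) ≤ k * D g := by
    intro k g
    induction k with
    | zero => simpa using hDz
    | succ k ih =>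
      rw [succ_nsmul]
      push_cast
      linarith [hadd (k • g) g]
  have hint : ∀ (k : ℤ) g, D (k • g) ≤ ‖k‖ * D g := by
    intro k g
    obtain ⟨m, rfl | rfl⟩ := k.eq_nat_or_neg
    · simpa using hnat m g
    · simpa using (hneg (m • g)).trans (hnat m g)
  refine ⟨∑ i, D (Pi.single i 1), fun g x => (hD g x).trans ?_⟩
  calc D g = D (∑ i, g i • (Pi.single i 1 : Fin n → ℤ)) := by rw [sum_single_zsmul]
    _ ≤ ∑ i, D (g i • (Pi.single i 1 : Fin n → ℤ)) :=
      Finset.le_sum_of_subadditive D hDz hadd _ _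
    _ ≤ ∑ i, D (Pi.single i 1) * ‖g‖ := Finset.sum_le_sum fun i _ => by
      rw [mul_comm]
      exact (hint _ _).trans (mul_le_mul_of_nonneg_right (norm_le_pi_norm g i) (hD0 _))
    _ = _ := by rw [Finset.sum_mul]

end Helpers

/-- For a uniquely ergodic `ℤⁿ`-action with unique invariant measure `μ`
and a continuous 1-cocycle `Ω`: if at some point `x` one has
`limsup_{g→∞} Ω(g,x)/‖g‖ ≤ 0`, then `∫ Ω(a,·) dμ ≤ 0` for every nontrivial `a`. -/
theorem integral_cocycle_nonpos_of_limsup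
    {n : ℕ} {X : Type*} [TopologicalSpace X] [CompactSpace X]
    [TopologicalSpace.MetrizableSpace X] [MeasurableSpace X] [BorelSpace X]
    [AddAction (Fin n → ℤ) X] [ContinuousConstVAdd (Fin n → ℤ) X]
    (Ω : (Fin n → ℤ) → X → ℝ) (hΩcont : ∀ g, Continuous (Ω g))
    (hΩ : ∀ (g h : Fin n → ℤ) (x : X), Ω g (h +ᵥ x) + Ω h x = Ω (g + h) x)
    (μ : Measure X) [IsProbabilityMeasure μ]
    (hμinv : ∀ g : Fin n → ℤ, Measure.map (fun x => g +ᵥ x) μ = μ)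
    (hμuniq : ∀ ν : Measure X, IsProbabilityMeasure ν →
      (∀ g : Fin n → ℤ, Measure.map (fun x => g +ᵥ x) ν = ν) → ν = μ)
    (a : Fin n → ℤ) (ha : a ≠ 0) (x : X)
    (hx : Filter.limsup (fun g : Fin n → ℤ => Ω g x / ‖g‖)
      (Filter.comap (fun g : Fin n → ℤ => ‖g‖) Filter.atTop) ≤ 0) :
    ∫ y, Ω a y ∂μ ≤ 0 := by
  obtain ⟨C, hC⟩ := cocycle_growth Ω hΩcont hΩ
  have hbdd : IsBoundedUnder (· ≤ ·) (Filter.comap (fun g : Fin n → ℤ => ‖g‖) Filter.atTop)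
      (fun g : Fin n → ℤ => Ω g x / ‖g‖) := by
    refine ⟨|C|, eventually_map.2 (Eventually.of_forall fun g => ?_)⟩
    refine div_le_of_le_mul₀ (norm_nonneg _) (abs_nonneg _) ?_
    exact (le_abs_self _).trans ((hC g x).trans
      (mul_le_mul_of_nonneg_right (le_abs_self C) (norm_nonneg _)))
  have hev : ∀ ε > 0, ∃ R : ℝ, ∀ g : Fin n → ℤ, R ≤ ‖g‖ → Ω g x ≤ ε * ‖g‖ := by
    intro ε hε
    have := eventually_lt_of_limsup_lt (lt_of_le_of_lt hx hε) hbdd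
    rw [eventually_comap] at this
    obtain ⟨R, hR⟩ := eventually_atTop.1 this
    refine ⟨max R 1, fun g hg => ?_⟩
    have h1 := hR ‖g‖ ((le_max_left _ _).trans hg) g rfl
    have h2 : 0 < ‖g‖ := lt_of_lt_of_le one_pos ((le_max_right _ _).trans hg)
    exact ((div_lt_iff₀ h2).1 h1).le
  have hev2 : ∀ ε > 0, ∃ K : ℝ, ∀ g : Fin n → ℤ, Ω g x ≤ K + ε * ‖g‖ := by
    intro ε hε
    obtain ⟨R, hR⟩ := hev ε hε
    refine ⟨|C| * |R|, fun g => ?_⟩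
    rcases le_total R ‖g‖ with h | h
    · have := hR g h
      have : 0 ≤ |C| * |R| := by positivity
      linarith
    · have h1 : |C| * ‖g‖ ≤ |C| * |R| :=
        mul_le_mul_of_nonneg_left (h.trans (le_abs_self R)) (abs_nonneg _)
      have h2 : C * ‖g‖ ≤ |C| * ‖g‖ :=
        mul_le_mul_of_nonneg_right (le_abs_self C) (norm_nonneg _)
      have h3 := (le_abs_self _).trans (hC g x)
      have h4 : 0 ≤ ε * ‖g‖ := by positivity
      linarith
  have htel : ∀ (g : Fin n → ℤ) (m : ℕ),
      ∑ k ∈ Finset.range m, Ω a (g +ᵥ ((k • a) +ᵥ x)) = Ω (m • a + g) x - Ω g x := by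
    intro g m
    induction m with
    | zero => simp
    | succ m ih =>
      rw [Finset.sum_range_succ, ih]
      have := hΩ a (m • a + g) x
      rw [← add_vadd, add_comm g, show (m + 1) • a + g = a + (m • a + g) by
        rw [succ_nsmul']; abel]
      linarith
  obtain ⟨ν, hνp, hν⟩ := exists_cesaro_limit (Measure.dirac x) a
  have hneg : ∀ g : Fin n → ℤ, ∫ y, Ω a (g +ᵥ y) ∂ν ≤ 0 := by
    intro g
    have hl := hν (fun y => Ω a (g +ᵥ y)) ((hΩcont a).comp (continuous_const_vadd g))
    have hle : ∀ ε > 0, ∫ y, Ω a (g +ᵥ y) ∂ν ≤ ε * ‖a‖ := by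
      intro ε hε
      obtain ⟨K, hK⟩ := hev2 ε hε
      have h0 := ((tendsto_one_div_add_atTop_nhds_zero_nat (𝕜 := ℝ)).mul_const
        (K + ε * ‖g‖ - Ω g x)).add_const (ε * ‖a‖)
      rw [zero_mul, zero_add] at h0
      refine le_of_tendsto_of_tendsto hl (h0.mono_left Nat.hyperfilter_le_atTop)
        (Eventually.of_forall fun m => ?_)
      have e : ∀ k : ℕ, ∫ y, Ω a (g +ᵥ ((k • a) +ᵥ y)) ∂(Measure.dirac x) =
          Ω a (g +ᵥ ((k • a) +ᵥ x)) := fun k => integral_dirac _ _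
      simp only [e]
      rw [htel]
      have hm : (0 : ℝ) < (m : ℝ) + 1 := by positivity
      have h1 := hK ((m + 1) • a + g)
      have h2 : ‖(m + 1) • a + g‖ ≤ ((m : ℝ) + 1) * ‖a‖ + ‖g‖ := by
        refine (norm_add_le _ _).trans (add_le_add ?_ le_rfl)
        have := norm_nsmul_le (n := m + 1) (a := a)
        push_cast at this
        exact this
      have h3 := mul_le_mul_of_nonneg_left h2 hε.le
      have h4 : Ω ((m + 1) • a + g) x - Ω g x ≤
          (K + ε * ‖g‖ - Ω g x) + ((m : ℝ) + 1) * (ε * ‖a‖) := by linarith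
      refine (mul_le_mul_of_nonneg_left h4 (inv_nonneg.2 hm.le)).trans (le_of_eq ?_)
      field_simp
    have hna : 0 < ‖a‖ := norm_pos_iff.2 ha
    refine le_of_forall_pos_le_add fun ε hε => ?_
    have := hle (ε / ‖a‖) (by positivity)
    rw [div_mul_cancel₀ _ hna.ne'] at this
    linarith
  obtain ⟨ν', hp', h1, h2⟩ := averaging_finset ν (Ω a) (hΩcont a) hneg
    (Finset.univ.image fun i : Fin n => (Pi.single i 1 : Fin n → ℤ))
  have hinv : ∀ g : Fin n → ℤ, Measure.map (fun x => g +ᵥ x) ν' = ν' := by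
    intro g
    change g ∈ stabSubgroup (Fin n → ℤ) ν'
    rw [← sum_single_zsmul g]
    refine AddSubgroup.sum_mem _ fun i _ => AddSubgroup.zsmul_mem _ ?_ _
    exact h2 _ (Finset.mem_image_of_mem _ (Finset.mem_univ i))
  have := hμuniq ν' hp' hinv
  rw [← this]
  simpa using h1 0
end

section
/- Let ℤⁿ act uniquely ergodically on a compact metrizable space X with unique invariant measure μ, and let Ω be a continuous 1-cocycle. Then the KMS spectrum K = {β : ∃ e^{β·Ω}-conformal probability measure} equals ℝ if Ω_μ = 0 and equals {0} if Ω_μ ≠ 0, where Ω_μ(g) = ∫_X Ω(g,x) dμ(x). -/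
open MeasureTheory

open MeasureTheory Filter Topology
open scoped CompactlySupported

/-- A state-valued sequence of functionals on `C(X)` has an ultrafilter limit represented by a
probability measure. -/
lemma exists_limit_measure {X : Type*} [TopologicalSpace X] [CompactSpace X] [T2Space X]
    [MeasurableSpace X] [BorelSpace X] (U : Ultrafilter ℕ) (L : ℕ → C(X, ℝ) → ℝ)
    (hadd : ∀ N f g, L N (f + g) = L N f + L N g)
    (hsmul : ∀ N (c : ℝ) f, L N (c • f) = c * L N f)
    (hpos : ∀ N f, (∀ x, 0 ≤ f x) → 0 ≤ L N f)
    (hone : ∀ N, L N 1 = 1) :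
    ∃ m : Measure X, IsProbabilityMeasure m ∧
      ∀ f : C(X, ℝ), Tendsto (fun N => L N f) U (𝓝 (∫ x, f x ∂m)) := by
  have hneg : ∀ N f, L N (-f) = - L N f := by
    intro N f
    have := hsmul N (-1) f
    simpa using this
  have hle : ∀ N f, L N f ≤ ‖f‖ := by
    intro N f
    have h1 := hpos N (‖f‖ • (1 : C(X, ℝ)) + (-f)) (by
      intro x
      have := (le_abs_self (f x)).trans (f.norm_coe_le_norm x)
      simp; linarith)
    rw [hadd, hsmul, hneg, hone] at h1
    linarith
  have habs : ∀ N f, L N f ∈ Set.Icc (-‖f‖) ‖f‖ := by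
    intro N f
    refine ⟨?_, hle N f⟩
    have := hle N (-f)
    rw [hneg, norm_neg] at this
    linarith
  have hlim : ∀ f : C(X, ℝ), ∃ a, Tendsto (fun N => L N f) U (𝓝 a) := by
    intro f
    have hc : IsCompact (Set.Icc (-‖f‖) ‖f‖) := isCompact_Icc
    obtain ⟨a, -, ha⟩ := hc.ultrafilter_le_nhds' (U.map fun N => L N f)
      (Filter.Eventually.of_forall (f := (U : Filter ℕ)) fun N => habs N f)
    exact ⟨a, ha⟩
  choose Λ hΛ using hlim
  let Λ₀ : C_c(X, ℝ) →ₗ[ℝ] ℝ :=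
    { toFun := fun f => Λ f.toContinuousMap
      map_add' := by
        intro f g
        refine tendsto_nhds_unique (hΛ _) ?_
        refine ((hΛ f.toContinuousMap).add (hΛ g.toContinuousMap)).congr ?_
        intro N
        exact (hadd _ _ _).symm
      map_smul' := by
        intro c f
        refine tendsto_nhds_unique (hΛ _) ?_
        refine ((hΛ f.toContinuousMap).const_mul c).congr ?_
        intro N
        exact (hsmul _ _ _).symm }
  let Λ₁ : C_c(X, ℝ) →ₚ[ℝ] ℝ := PositiveLinearMap.mk₀ Λ₀ (by
    intro f hf
    exact ge_of_tendsto (hΛ f.toContinuousMap)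
      (Filter.Eventually.of_forall fun N => hpos N _ fun x => hf x))
  have hIntegr : ∀ f : C(X, ℝ), ∫ x, f x ∂(RealRMK.rieszMeasure Λ₁) = Λ f := by
    intro f
    exact RealRMK.integral_rieszMeasure Λ₁ (CompactlySupportedContinuousMap.continuousMapEquiv f)
  refine ⟨RealRMK.rieszMeasure Λ₁, ?_, ?_⟩
  · have h1 := hIntegr 1
    have h2 : Λ 1 = 1 := tendsto_nhds_unique (hΛ 1) (by simp [hone])
    rw [h2] at h1
    simp [Measure.real] at h1
    exact ⟨(ENNReal.toReal_eq_one_iff _).1 h1⟩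
  · intro f
    rw [hIntegr]
    exact hΛ f

lemma summable_exp_int {s : ℝ} (hs : 0 < s) : Summable fun k : ℤ => Real.exp (-s * |(k : ℝ)|) := by
  have h : Summable fun k : ℕ => Real.exp (-s * k) := by
    have := Real.summable_exp_nat_mul_iff (a := -s)
    simpa [mul_comm] using this.2 (by linarith)
  apply Summable.of_nat_of_neg <;> simpa using h

/-- The `ℓ¹` length on `ℤⁿ`. -/
noncomputable def len {n : ℕ} (g : Fin n → ℤ) : ℝ := ∑ i, |(g i : ℝ)|

lemma len_add {n : ℕ} (g h : Fin n → ℤ) : len (g + h) ≤ len g + len h := by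
  unfold len
  rw [← Finset.sum_add_distrib]
  refine Finset.sum_le_sum fun i _ => ?_
  simpa using abs_add_le (g i : ℝ) (h i)

lemma len_neg {n : ℕ} (g : Fin n → ℤ) : len (-g) = len g := by
  simp [len]

lemma summable_exp_len : ∀ {n : ℕ} {s : ℝ} (_ : 0 < s),
    Summable fun g : Fin n → ℤ => Real.exp (-s * len g)
  | 0, s, hs => Summable.of_finite
  | n + 1, s, hs => by
    have h := (summable_exp_int hs).mul_of_nonneg (summable_exp_len (n := n) hs)
      (fun _ => (Real.exp_pos _).le) (fun _ => (Real.exp_pos _).le)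
    rw [← (Fin.consEquiv fun _ => ℤ).summable_iff]
    refine h.congr ?_
    rintro ⟨a, b⟩
    simp only [Function.comp, Fin.consEquiv, Equiv.coe_fn_mk, len, Fin.sum_univ_succ, Fin.cons_zero, Fin.cons_succ]
    rw [← Real.exp_add]; ring_nf

/-- The averaging construction: a Patterson-type average of a base measure `ν` over the orbit. -/
lemma exists_average {n : ℕ} {X : Type*} [TopologicalSpace X] [CompactSpace X] [T2Space X]
    [MeasurableSpace X] [BorelSpace X]
    [AddAction (Fin n → ℤ) X] [ContinuousConstVAdd (Fin n → ℤ) X]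
    (Ω : (Fin n → ℤ) → X → ℝ) (hΩcont : ∀ g, Continuous (Ω g))
    (hΩ : ∀ (g h : Fin n → ℤ) (x : X), Ω g (h +ᵥ x) + Ω h x = Ω (g + h) x)
    (β : ℝ) (ν : Measure X) [IsProbabilityMeasure ν]
    (hsum : ∀ s : ℝ, 0 < s → Summable fun g : Fin n → ℤ =>
      Real.exp (-s * len g) * ∫ x, Real.exp (β * Ω g x) ∂ν) :
    ∃ m : Measure X, IsProbabilityMeasure m ∧ ConformalMeasureAdd Ω β m ∧
      ∀ (f : C(X, ℝ)) (c : ℝ), (∀ h : Fin n → ℤ,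
        ∫ x, f (h +ᵥ x) * Real.exp (β * Ω h x) ∂ν = c * ∫ x, Real.exp (β * Ω h x) ∂ν) →
        ∫ x, f x ∂m = c := by
  have hE : ∀ g, Continuous fun x => Real.exp (β * Ω g x) := fun g =>
    Real.continuous_exp.comp (continuous_const.mul (hΩcont g))
  have hIntegr : ∀ φ : X → ℝ, Continuous φ → Integrable φ ν := fun φ hφ =>
    hφ.integrable_of_hasCompactSupport (HasCompactSupport.of_compactSpace φ)
  let T : (Fin n → ℤ) → C(X, ℝ) → C(X, ℝ) := fun g f =>
    ⟨fun x => f (g +ᵥ x) * Real.exp (β * Ω g x),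
      (f.continuous.comp (continuous_const_vadd g)).mul (hE g)⟩
  let a : (Fin n → ℤ) → C(X, ℝ) → ℝ := fun g f => ∫ x, f (g +ᵥ x) * Real.exp (β * Ω g x) ∂ν
  have haint : ∀ g (f : C(X, ℝ)), Integrable (fun x => f (g +ᵥ x) * Real.exp (β * Ω g x)) ν :=
    fun g f => hIntegr _ (T g f).continuous
  have ha1 : ∀ g, a g 1 = ∫ x, Real.exp (β * Ω g x) ∂ν := by intro g; simp [a]
  have ha1pos : ∀ g, 0 < a g 1 := by
    intro g
    rw [ha1]
    exact integral_exp_pos (hIntegr _ (hE g))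
  have haadd : ∀ g f fb, a g (f + fb) = a g f + a g fb := by
    intro g f fb
    simp only [a]
    rw [← integral_add (haint g f) (haint g fb)]
    simp [add_mul]
  have hasmul : ∀ g (c : ℝ) f, a g (c • f) = c * a g f := by
    intro g c f
    simp only [a]
    rw [← integral_const_mul]
    simp [mul_assoc]
  have hapos : ∀ g f, (∀ x, 0 ≤ f x) → 0 ≤ a g f := by
    intro g f hf
    exact integral_nonneg fun x => mul_nonneg (hf _) (Real.exp_pos _).le
  have habs : ∀ g f, |a g f| ≤ ‖f‖ * a g 1 := by
    intro g f
    rw [ha1, ← integral_const_mul]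
    refine (abs_integral_le_integral_abs).trans ?_
    refine integral_mono (haint g f).abs ((hIntegr _ (hE g)).const_mul _) fun x => ?_
    simp only [abs_mul, abs_of_pos (Real.exp_pos _)]
    exact mul_le_mul_of_nonneg_right (f.norm_coe_le_norm _) (Real.exp_pos _).le
  have haT : ∀ g h f, a g (T h f) = a (g + h) f := by
    intro g h f
    simp only [a, T, ContinuousMap.coe_mk]
    congr 1
    ext x
    rw [mul_assoc, ← Real.exp_add, ← mul_add, hΩ, vadd_vadd, add_comm h g]
  let w : ℝ → (Fin n → ℤ) → ℝ := fun s g => Real.exp (-s * len g)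
  have hwpos : ∀ s g, 0 < w s g := fun s g => Real.exp_pos _
  have hs1 : ∀ s, 0 < s → Summable fun g => w s g * a g 1 := by
    intro s hs
    simpa only [ha1] using hsum s hs
  have hsf : ∀ s, 0 < s → ∀ f, Summable fun g => w s g * a g f := by
    intro s hs f
    refine Summable.of_norm_bounded ((hs1 s hs).mul_left ‖f‖) fun g => ?_
    rw [Real.norm_eq_abs, abs_mul, abs_of_pos (hwpos s g)]
    have := mul_le_mul_of_nonneg_left (habs g f) (hwpos s g).le
    linarith
  let Z : ℝ → ℝ := fun s => ∑' g, w s g * a g 1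
  have hZ : ∀ s, 0 < s → 0 < Z s := fun s hs =>
    (hs1 s hs).tsum_pos (fun g => (mul_pos (hwpos s g) (ha1pos g)).le) 0
      (mul_pos (hwpos s 0) (ha1pos 0))
  let A : ℝ → C(X, ℝ) → ℝ := fun s f => (∑' g, w s g * a g f) / Z s
  have hinv : ∀ s, 0 < s → ∀ h f, |A s (T h f) - A s f| ≤ (Real.exp (s * len h) - 1) * ‖f‖ := by
    intro s hs h f
    have hsh : Summable fun g => w s (g - h) * a g f := by
      have := hsf s hs (T h f)
      rw [← (Equiv.addRight h).summable_iff]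
      refine this.congr fun g => ?_
      simp [haT]
    have e1 : (∑' g, w s g * a g (T h f)) = ∑' g, w s (g - h) * a g f := by
      rw [← (Equiv.addRight h).tsum_eq fun g => w s (g - h) * a g f]
      refine tsum_congr fun g => ?_
      simp [haT]
    have e2 : A s (T h f) - A s f = (∑' g, (w s (g - h) - w s g) * a g f) / Z s := by
      simp only [A]
      rw [e1, ← sub_div, ← hsh.tsum_sub (hsf s hs f)]
      simp only [sub_mul]
    have hw : ∀ g, |w s (g - h) - w s g| ≤ (Real.exp (s * len h) - 1) * w s g := by
      intro g
      have l1 : len (g - h) ≤ len g + len h := by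
        have := len_add g (-h)
        rwa [len_neg, ← sub_eq_add_neg] at this
      have l2 : len g ≤ len (g - h) + len h := by
        have := len_add (g - h) h
        rwa [sub_add_cancel] at this
      have k1 : w s (g - h) ≤ Real.exp (s * len h) * w s g := by
        simp only [w]
        rw [← Real.exp_add]
        apply Real.exp_le_exp.2
        nlinarith
      have k2 : Real.exp (- (s * len h)) * w s g ≤ w s (g - h) := by
        simp only [w]
        rw [← Real.exp_add]
        apply Real.exp_le_exp.2
        nlinarith
      have k3 : 2 ≤ Real.exp (s * len h) + Real.exp (- (s * len h)) := by
        have := Real.add_one_le_exp (s * len h)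
        have := Real.add_one_le_exp (-(s * len h))
        linarith
      have := mul_le_mul_of_nonneg_right k3 (hwpos s g).le
      rw [abs_le]
      constructor <;> linarith
    have hb : |∑' g, (w s (g - h) - w s g) * a g f| ≤
        ((Real.exp (s * len h) - 1) * ‖f‖) * Z s := by
      simp only [Z]
      rw [← tsum_mul_left, ← Real.norm_eq_abs]
      refine tsum_of_norm_bounded ((hs1 s hs).mul_left _).hasSum fun g => ?_
      rw [Real.norm_eq_abs, abs_mul]
      calc _ ≤ ((Real.exp (s * len h) - 1) * w s g) * (‖f‖ * a g 1) :=
            mul_le_mul (hw g) (habs g f) (abs_nonneg _) ((abs_nonneg _).trans (hw g))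
        _ = _ := by ring
    rw [e2, abs_div, abs_of_pos (hZ s hs), div_le_iff₀ (hZ s hs)]
    exact hb
  let σ : ℕ → ℝ := fun N => 1 / ((N : ℝ) + 1)
  have hσ : ∀ N, 0 < σ N := fun N => by positivity
  have hσ0 : Tendsto σ atTop (𝓝 0) := tendsto_one_div_add_atTop_nhds_zero_nat
  let U : Ultrafilter ℕ := Ultrafilter.of atTop
  have hU : (U : Filter ℕ) ≤ atTop := Ultrafilter.of_le _
  obtain ⟨m, hm, hlim⟩ := exists_limit_measure U (fun N => A (σ N))
    (by
      intro N f g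
      simp only [A, haadd, mul_add]
      rw [(hsf _ (hσ N) f).tsum_add (hsf _ (hσ N) g), add_div])
    (by
      intro N c f
      simp only [A, hasmul]
      rw [mul_div_assoc', ← tsum_mul_left]
      congr 1
      exact tsum_congr fun g => by ring)
    (by
      intro N f hf
      exact div_nonneg (tsum_nonneg fun g => mul_nonneg (hwpos _ g).le (hapos g f hf))
        (hZ _ (hσ N)).le)
    (by
      intro N
      exact div_self (hZ _ (hσ N)).ne')
  refine ⟨m, hm, ?_, ?_⟩
  · intro h f
    have h1 := (hlim (T h f)).sub (hlim f)
    have h2 : Tendsto (fun N => A (σ N) (T h f) - A (σ N) f) U (𝓝 0) := by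
      have h3 : Tendsto (fun N => (Real.exp (σ N * len h) - 1) * ‖f‖) atTop (𝓝 0) := by
        have : Tendsto (fun t : ℝ => (Real.exp (t * len h) - 1) * ‖f‖) (𝓝 0) (𝓝 0) := by
          have hc : Continuous (fun t : ℝ => (Real.exp (t * len h) - 1) * ‖f‖) := by fun_prop
          simpa using hc.tendsto 0
        exact this.comp hσ0
      exact squeeze_zero_norm (fun N => hinv _ (hσ N) h f) (h3.mono_left hU)
    exact sub_eq_zero.1 (tendsto_nhds_unique h1 h2)
  · intro f c hc
    refine tendsto_nhds_unique (hlim f) ?_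
    have : ∀ N, A (σ N) f = c := by
      intro N
      have : ∀ g, a g f = c * a g 1 := fun g => by rw [ha1]; exact hc g
      simp only [A, this]
      rw [div_eq_iff (hZ _ (hσ N)).ne']
      simp only [Z]
      rw [← tsum_mul_left]
      exact tsum_congr fun g => by ring
    simp [this]

section cocycle

variable {n : ℕ} {X : Type*} [AddAction (Fin n → ℤ) X]

lemma cocycle_zero (Ω : (Fin n → ℤ) → X → ℝ)
    (hΩ : ∀ (g h : Fin n → ℤ) (x : X), Ω g (h +ᵥ x) + Ω h x = Ω (g + h) x) (x : X) :
    Ω 0 x = 0 := by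
  have := hΩ 0 0 x
  simp at this
  exact this

lemma cocycle_nsmul (Ω : (Fin n → ℤ) → X → ℝ)
    (hΩ : ∀ (g h : Fin n → ℤ) (x : X), Ω g (h +ᵥ x) + Ω h x = Ω (g + h) x)
    (g : Fin n → ℤ) (x : X) (k : ℕ) :
    Ω (k • g) x = ∑ j ∈ Finset.range k, Ω g ((j • g) +ᵥ x) := by
  induction k with
  | zero => simp [cocycle_zero Ω hΩ]
  | succ k ih => rw [Finset.sum_range_succ, ← ih, succ_nsmul', ← hΩ]; ring

end cocycle

/-- Uniform convergence of the Birkhoff averages of the cocycle along a single direction. -/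
lemma uniform_growth
    {n : ℕ} {X : Type*} [TopologicalSpace X] [CompactSpace X]
    [TopologicalSpace.MetrizableSpace X] [MeasurableSpace X] [BorelSpace X]
    [AddAction (Fin n → ℤ) X] [ContinuousConstVAdd (Fin n → ℤ) X]
    (Ω : (Fin n → ℤ) → X → ℝ) (hΩcont : ∀ g, Continuous (Ω g))
    (hΩ : ∀ (g h : Fin n → ℤ) (x : X), Ω g (h +ᵥ x) + Ω h x = Ω (g + h) x)
    (μ : Measure X)
    (hμuniq : ∀ ν : Measure X, IsProbabilityMeasure ν →
      (∀ g : Fin n → ℤ, Measure.map (fun x => g +ᵥ x) ν = ν) → ν = μ)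
    (g : Fin n → ℤ) (ε : ℝ) (hε : 0 < ε) :
    ∃ K : ℕ, ∀ k : ℕ, K ≤ k → ∀ x, |Ω (k • g) x - k * ∫ x, Ω g x ∂μ| ≤ ε * k := by
  by_contra! hcon
  have hconb : ∀ N : ℕ, ∃ k : ℕ, N + 1 ≤ k ∧ ∃ x, ε * k < |Ω (k • g) x - k * ∫ x, Ω g x ∂μ| :=
    fun N => hcon (N + 1)
  choose k hk x hx using hconb
  have hkpos : ∀ N, (0 : ℝ) < k N := fun N => by
    have := hk N
    exact_mod_cast (by omega : 0 < k N)
  let U : Ultrafilter ℕ := Ultrafilter.of atTop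
  have hU : (U : Filter ℕ) ≤ atTop := Ultrafilter.of_le _
  obtain ⟨ν, hν, hlim⟩ := exists_limit_measure U
    (fun N (f : C(X, ℝ)) => (∑ j ∈ Finset.range (k N), f ((j • g) +ᵥ x N)) / k N)
    (by intro N f fb; simp [Finset.sum_add_distrib, add_div])
    (by intro N c f; simp [← Finset.mul_sum, mul_div_assoc])
    (by intro N f hf; exact div_nonneg (Finset.sum_nonneg fun j _ => hf _) (hkpos N).le)
    (by intro N; simp [(hkpos N).ne'])
  have hIntegrν : ∀ φ : X → ℝ, Continuous φ → Integrable φ ν := fun φ hφ =>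
    hφ.integrable_of_hasCompactSupport (HasCompactSupport.of_compactSpace φ)
  -- `ν` is `g`-invariant
  have hginv : ∀ f : C(X, ℝ), ∫ y, f (g +ᵥ y) ∂ν = ∫ y, f y ∂ν := by
    intro f
    let fb : C(X, ℝ) := ⟨fun y => f (g +ᵥ y), f.continuous.comp (continuous_const_vadd g)⟩
    have h1 := (hlim fb).sub (hlim f)
    refine sub_eq_zero.1 (tendsto_nhds_unique h1 ?_)
    have h3 : Tendsto (fun N : ℕ => (2 * ‖f‖) * (1 / ((N : ℝ) + 1))) atTop (𝓝 0) := by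
      simpa using tendsto_one_div_add_atTop_nhds_zero_nat.const_mul (2 * ‖f‖)
    refine squeeze_zero_norm (fun N => ?_) (h3.mono_left hU)
    have e : (∑ j ∈ Finset.range (k N), fb ((j • g) +ᵥ x N)) -
        (∑ j ∈ Finset.range (k N), f ((j • g) +ᵥ x N)) = f ((k N • g) +ᵥ x N) - f (x N) := by
      rw [← Finset.sum_sub_distrib]
      have := Finset.sum_range_sub (fun j => f ((j • g) +ᵥ x N)) (k N)
      simp only [zero_smul, zero_vadd] at this
      rw [← this]
      refine Finset.sum_congr rfl fun j _ => ?_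
      simp only [fb, ContinuousMap.coe_mk, vadd_vadd, succ_nsmul']
    rw [← sub_div, e, Real.norm_eq_abs, abs_div, abs_of_pos (hkpos N), div_eq_mul_one_div]
    have a1 : |f ((k N • g) +ᵥ x N) - f (x N)| ≤ 2 * ‖f‖ := by
      have b1 := f.norm_coe_le_norm ((k N • g) +ᵥ x N)
      have b2 := f.norm_coe_le_norm (x N)
      rw [Real.norm_eq_abs] at b1 b2
      have := abs_sub (f ((k N • g) +ᵥ x N)) (f (x N))
      linarith
    have a2 : 1 / (k N : ℝ) ≤ 1 / ((N : ℝ) + 1) := by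
      apply one_div_le_one_div_of_le (by positivity)
      exact_mod_cast hk N
    exact mul_le_mul a1 a2 (by positivity) (by positivity)
  -- the value on `Ω g`
  have hdiff : ε ≤ |∫ y, Ω g y ∂ν - ∫ y, Ω g y ∂μ| := by
    have h1 := ((hlim ⟨Ω g, hΩcont g⟩).sub_const (∫ y, Ω g y ∂μ)).abs
    refine ge_of_tendsto h1 (Filter.Eventually.of_forall fun N => ?_)
    have h2 := (hx N).le
    rw [cocycle_nsmul Ω hΩ] at h2
    simp only [ContinuousMap.coe_mk]
    have h3 : (∑ j ∈ Finset.range (k N), Ω g (j • g +ᵥ x N)) / (k N : ℝ) - ∫ y, Ω g y ∂μ =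
        ((∑ j ∈ Finset.range (k N), Ω g (j • g +ᵥ x N)) - k N * ∫ y, Ω g y ∂μ) / k N := by
      have := (hkpos N).ne'
      field_simp
    rw [h3, abs_div, abs_of_pos (hkpos N), le_div_iff₀ (hkpos N)]
    exact h2
  have hconst : ∀ h : Fin n → ℤ, ∫ y, Ω g (h +ᵥ y) ∂ν = ∫ y, Ω g y ∂ν := by
    intro h
    have e : ∀ y, Ω g (h +ᵥ y) = (Ω h (g +ᵥ y) + Ω g y) - Ω h y := by
      intro y
      have e1 := hΩ g h y
      have e2 := hΩ h g y
      rw [add_comm h g] at e2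
      linarith
    simp only [e]
    have c1 : Continuous fun y => Ω h (g +ᵥ y) := (hΩcont h).comp (continuous_const_vadd g)
    have c2 : Continuous fun y => Ω h (g +ᵥ y) + Ω g y := c1.add (hΩcont g)
    rw [integral_sub (hIntegrν _ c2) (hIntegrν _ (hΩcont h)),
      integral_add (hIntegrν _ c1) (hIntegrν _ (hΩcont g))]
    have := hginv ⟨Ω h, hΩcont h⟩
    simp only [ContinuousMap.coe_mk] at this
    rw [this]; ring
  obtain ⟨m, hm, hconf, hval⟩ := exists_average Ω hΩcont hΩ 0 ν
    (by intro s hs; simpa using summable_exp_len hs)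
  have hmμ : m = μ := by
    refine hμuniq m hm fun h => ?_
    have hmeas : Measurable fun y : X => h +ᵥ y := (continuous_const_vadd h).measurable
    have : IsProbabilityMeasure (Measure.map (fun y => h +ᵥ y) m) :=
      Measure.isProbabilityMeasure_map hmeas.aemeasurable
    let _ := TopologicalSpace.metrizableSpaceMetric X
    refine ext_of_forall_integral_eq_of_IsFiniteMeasure fun f => ?_
    rw [integral_map hmeas.aemeasurable f.continuous.aestronglyMeasurable]
    simpa using hconf h f.toContinuousMap
  have h5 := hval ⟨Ω g, hΩcont g⟩ (∫ y, Ω g y ∂ν) (by intro h; simpa using hconst h)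
  simp only [ContinuousMap.coe_mk, hmμ] at h5
  rw [h5] at hdiff
  simp at hdiff
  linarith

/-- Sublinear growth of a cocycle with vanishing mean. -/
lemma sublinear_growth
    {n : ℕ} {X : Type*} [TopologicalSpace X] [CompactSpace X]
    [TopologicalSpace.MetrizableSpace X] [MeasurableSpace X] [BorelSpace X]
    [AddAction (Fin n → ℤ) X] [ContinuousConstVAdd (Fin n → ℤ) X]
    (Ω : (Fin n → ℤ) → X → ℝ) (hΩcont : ∀ g, Continuous (Ω g))
    (hΩ : ∀ (g h : Fin n → ℤ) (x : X), Ω g (h +ᵥ x) + Ω h x = Ω (g + h) x)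
    (μ : Measure X)
    (hμuniq : ∀ ν : Measure X, IsProbabilityMeasure ν →
      (∀ g : Fin n → ℤ, Measure.map (fun x => g +ᵥ x) ν = ν) → ν = μ)
    (h0 : ∀ g : Fin n → ℤ, ∫ x, Ω g x ∂μ = 0) (ε : ℝ) (hε : 0 < ε) :
    ∃ C : ℝ, ∀ g x, |Ω g x| ≤ ε * len g + C := by
  have hnat : ∀ g : Fin n → ℤ, ∃ C : ℝ, ∀ (k : ℕ) x, |Ω (k • g) x| ≤ ε * k + C := by
    intro g
    obtain ⟨K, hK⟩ := uniform_growth Ω hΩcont hΩ μ hμuniq g ε hε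
    let F : ℕ → C(X, ℝ) := fun k => ⟨Ω (k • g), hΩcont _⟩
    have hC : 0 ≤ ∑ k ∈ Finset.range K, ‖F k‖ := Finset.sum_nonneg fun _ _ => norm_nonneg _
    refine ⟨∑ k ∈ Finset.range K, ‖F k‖, fun k x => ?_⟩
    by_cases hkK : K ≤ k
    · have := hK k hkK x
      rw [h0, mul_zero, sub_zero] at this
      linarith
    · have h1 : |Ω (k • g) x| ≤ ‖F k‖ := (F k).norm_coe_le_norm x
      have h2 : ‖F k‖ ≤ ∑ k ∈ Finset.range K, ‖F k‖ :=
        Finset.single_le_sum (f := fun k => ‖F k‖) (fun _ _ => norm_nonneg _)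
          (Finset.mem_range.2 (by omega))
      have : 0 ≤ ε * k := by positivity
      linarith
  have hIntegr : ∀ g : Fin n → ℤ, ∃ C : ℝ, ∀ (k : ℤ) x, |Ω (k • g) x| ≤ ε * |(k : ℝ)| + C := by
    intro g
    obtain ⟨C, hC⟩ := hnat g
    refine ⟨C, fun k x => ?_⟩
    obtain ⟨j, rfl | rfl⟩ := k.eq_nat_or_neg
    · simpa using hC j x
    · have h1 := hΩ (j • g) (-(j • g)) x
      rw [add_neg_cancel, cocycle_zero Ω hΩ] at h1
      have h2 := hC j (-(j • g) +ᵥ x)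
      have h3 : Ω (-(j • g)) x = - Ω (j • g) (-(j • g) +ᵥ x) := by linarith
      simp only [neg_smul, natCast_zsmul, h3, abs_neg, Int.cast_neg, Int.cast_natCast, Nat.abs_cast]
      exact h2
  choose C hC using fun i : Fin n => hIntegr (Pi.single i 1)
  refine ⟨∑ i, C i, fun g x => ?_⟩
  have key : ∀ (S : Finset (Fin n)) x, |Ω (∑ i ∈ S, g i • Pi.single i 1) x| ≤
      ∑ i ∈ S, (ε * |(g i : ℝ)| + C i) := by
    intro S
    induction S using Finset.induction_on with
    | empty => intro x; simp [cocycle_zero Ω hΩ]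
    | insert i S hi ih =>
      intro x
      rw [Finset.sum_insert hi, Finset.sum_insert hi, ← hΩ]
      exact (abs_add_le _ _).trans (add_le_add (hC i _ _) (ih x))
  have hg : ∑ i, g i • (Pi.single i 1 : Fin n → ℤ) = g := by
    ext j
    simp [Finset.sum_apply, Pi.single_apply]
  have := key Finset.univ x
  rw [hg, Finset.sum_add_distrib, ← Finset.mul_sum] at this
  exact this

/-- For a uniquely ergodic `ℤⁿ`-action with unique invariant measure
`μ`, the KMS spectrum is `ℝ` when `Ω_μ = 0` and `{0}` when `Ω_μ ≠ 0`. -/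
theorem kms_spectrum_uniquely_ergodic
    {n : ℕ} {X : Type*} [TopologicalSpace X] [CompactSpace X]
    [TopologicalSpace.MetrizableSpace X] [MeasurableSpace X] [BorelSpace X]
    [AddAction (Fin n → ℤ) X] [ContinuousConstVAdd (Fin n → ℤ) X]
    (Ω : (Fin n → ℤ) → X → ℝ) (hΩcont : ∀ g, Continuous (Ω g))
    (hΩ : ∀ (g h : Fin n → ℤ) (x : X), Ω g (h +ᵥ x) + Ω h x = Ω (g + h) x)
    (μ : Measure X) [IsProbabilityMeasure μ]
    (hμinv : ∀ g : Fin n → ℤ, Measure.map (fun x => g +ᵥ x) μ = μ)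
    (hμuniq : ∀ ν : Measure X, IsProbabilityMeasure ν →
      (∀ g : Fin n → ℤ, Measure.map (fun x => g +ᵥ x) ν = ν) → ν = μ) :
    ((∀ g : Fin n → ℤ, ∫ x, Ω g x ∂μ = 0) →
      {β : ℝ | ∃ m : Measure X, IsProbabilityMeasure m ∧ ConformalMeasureAdd Ω β m}
        = Set.univ) ∧
    ((∃ g : Fin n → ℤ, ∫ x, Ω g x ∂μ ≠ 0) →
      {β : ℝ | ∃ m : Measure X, IsProbabilityMeasure m ∧ ConformalMeasureAdd Ω β m}
        = {0}) := by
  have hX : Nonempty X := by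
    by_contra hne
    rw [not_nonempty_iff] at hne
    have h1 : μ Set.univ = 1 := measure_univ
    rw [Set.univ_eq_empty_iff.2 hne, measure_empty] at h1
    exact zero_ne_one h1
  refine ⟨fun h0 => Set.eq_univ_of_forall fun β => ?_, ?_⟩
  · obtain ⟨x₀⟩ := hX
    obtain ⟨m, hm, hconf, -⟩ := exists_average Ω hΩcont hΩ β (Measure.dirac x₀) (by
      intro s hs
      have hε : 0 < s / (2 * (|β| + 1)) := by positivity
      obtain ⟨C, hC⟩ := sublinear_growth Ω hΩcont hΩ μ hμuniq h0 _ hε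
      have hsum := (summable_exp_len (n := n) (half_pos hs)).mul_right (Real.exp (|β| * C))
      refine Summable.of_nonneg_of_le
        (fun g => mul_nonneg (Real.exp_pos _).le (integral_nonneg fun x => (Real.exp_pos _).le))
        (fun g => ?_) hsum
      rw [integral_dirac, ← Real.exp_add, ← Real.exp_add]
      apply Real.exp_le_exp.2
      have h1 : β * Ω g x₀ ≤ |β| * (s / (2 * (|β| + 1)) * len g + C) := by
        refine (le_abs_self _).trans ?_
        rw [abs_mul]
        exact mul_le_mul_of_nonneg_left (hC g x₀) (abs_nonneg _)
      have hlen : 0 ≤ len g := Finset.sum_nonneg fun _ _ => abs_nonneg _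
      have h2 : |β| * (s / (2 * (|β| + 1))) ≤ s / 2 := by
        have hb : 0 < |β| + 1 := by positivity
        rw [mul_div_assoc', div_le_div_iff₀ (by positivity) (by positivity)]
        nlinarith
      have h3 := mul_le_mul_of_nonneg_right h2 hlen
      linarith)
    exact ⟨m, hm, hconf⟩
  · rintro ⟨g, hg⟩
    ext β
    simp only [Set.mem_ofPred_eq, Set.mem_singleton_iff]
    constructor
    · rintro ⟨m, hm, hconf⟩
      by_contra hβ
      set c := ∫ x, Ω g x ∂μ with hc
      obtain ⟨K, hK⟩ := uniform_growth Ω hΩcont hΩ μ hμuniq g (|c| / 2) (by positivity)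
      have hk := hK (K + 1) (Nat.le_succ K)
      have h1 := hconf ((K + 1) • g) 1
      simp only [ContinuousMap.one_apply, one_mul, integral_const, probReal_univ, smul_eq_mul] at h1
      have hkpos : (0 : ℝ) < ((K + 1 : ℕ) : ℝ) := by positivity
      have hcts : Continuous fun x => Real.exp (β * Ω ((K + 1) • g) x) :=
        Real.continuous_exp.comp (continuous_const.mul (hΩcont _))
      have hi : Integrable (fun x => Real.exp (β * Ω ((K + 1) • g) x)) m :=
        hcts.integrable_of_hasCompactSupport (HasCompactSupport.of_compactSpace _)
      have hb : ∀ x, |β * Ω ((K + 1) • g) x - (K + 1 : ℕ) * (β * c)| ≤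
          (K + 1 : ℕ) * |β * c| / 2 := by
        intro x
        have h2 := mul_le_mul_of_nonneg_left (hk x) (abs_nonneg β)
        rw [← abs_mul] at h2
        rw [abs_mul β c]
        calc _ = |β * (Ω ((K + 1) • g) x - (K + 1 : ℕ) * c)| := by congr 1; ring
          _ ≤ _ := h2
          _ = _ := by ring
      have hβc : β * c ≠ 0 := mul_ne_zero hβ hg
      rcases lt_or_gt_of_ne hβc with hneg | hpos
      · have hd : (K + 1 : ℕ) * (β * c) / 2 < 0 := by
          have := mul_neg_of_pos_of_neg hkpos hneg
          linarith
        have h3 : ∫ x, Real.exp (β * Ω ((K + 1) • g) x) ∂m ≤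
            ∫ x, Real.exp ((K + 1 : ℕ) * (β * c) / 2) ∂m := by
          refine integral_mono hi (integrable_const _) fun x => Real.exp_le_exp.2 ?_
          have := (abs_le.1 (hb x)).2
          rw [abs_of_neg hneg] at this
          linarith
        rw [h1, integral_const, probReal_univ, one_smul] at h3
        have := Real.exp_lt_one_iff.2 hd
        linarith
      · have hd : 0 < (K + 1 : ℕ) * (β * c) / 2 := by positivity
        have h3 : ∫ x, Real.exp ((K + 1 : ℕ) * (β * c) / 2) ∂m ≤
            ∫ x, Real.exp (β * Ω ((K + 1) • g) x) ∂m := by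
          refine integral_mono (integrable_const _) hi fun x => Real.exp_le_exp.2 ?_
          have := (abs_le.1 (hb x)).1
          rw [abs_of_pos hpos] at this
          linarith
        rw [h1, integral_const, probReal_univ, one_smul] at h3
        have := Real.one_lt_exp_iff.2 hd
        linarith
    · rintro rfl
      refine ⟨μ, inferInstance, fun h f => ?_⟩
      have hmeas : Measurable fun y : X => h +ᵥ y := (continuous_const_vadd h).measurable
      have h1 := integral_map (μ := μ) hmeas.aemeasurable (f := f)
        f.continuous.aestronglyMeasurable
      rw [hμinv h] at h1
      simpa using h1.symm
end
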